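/- Let f : ℝ² → ℝ² be a C^∞ map with f(0)=0 which has corank one at 0, let λ be its Jacobian determinant, and let η be any null vector field for f. Then for every integer r ≥ 4, the r-jet j^r f(0) is A^r-equivalent to the r-jet at 0 of the map (x,y) ↦ (x, xy² + y^r) if and only if dλ(0) = 0, det H_λ(0) < 0, (η^i λ)(0) = 0 for all 2 ≤ i ≤ r−2, and (η^{r−1} λ)(0) ≠ 0. -/

import Mathlib

open Filter Topology

noncomputable section

/-- Directional derivative of a scalar function. -/
def dop (v : ℝ × ℝ) (g : ℝ × ℝ → ℝ) : ℝ × ℝ → ℝ :=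
  fun p => fderiv ℝ g p v

/-- Partial derivative operator in the first coordinate. -/
def pdx : (ℝ × ℝ → ℝ) → ℝ × ℝ → ℝ := dop (1, 0)

/-- Partial derivative operator in the second coordinate. -/
def pdy : (ℝ × ℝ → ℝ) → ℝ × ℝ → ℝ := dop (0, 1)

/-- Taylor coefficient `a_{ij} = ∂_x^i ∂_y^j g(0,0) / (i! j!)` of `g` at the origin. -/
def tcoeff (g : ℝ × ℝ → ℝ) (i j : ℕ) : ℝ :=
  (pdx^[i] (pdy^[j] g)) 0 / (Nat.factorial i * Nat.factorial j)

/-- The Jacobian determinant `λ_f` of a map `f : ℝ² → ℝ²`. -/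
def jacDet (f : ℝ × ℝ → ℝ × ℝ) (p : ℝ × ℝ) : ℝ :=
  (fderiv ℝ f p (1, 0)).1 * (fderiv ℝ f p (0, 1)).2 -
    (fderiv ℝ f p (1, 0)).2 * (fderiv ℝ f p (0, 1)).1

/-- `f` has corank one at `0` : the derivative of `f` at `0` has rank one. -/
def CorankOne (f : ℝ × ℝ → ℝ × ℝ) : Prop :=
  LinearMap.rank ((fderiv ℝ f 0).toLinearMap) = 1

/-- `η` is a null vector field for `f` near `0`. -/
def IsNullVF (f η : ℝ × ℝ → ℝ × ℝ) : Prop :=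
  η 0 ≠ 0 ∧ ∃ U ∈ 𝓝 (0 : ℝ × ℝ),
    ContDiffOn ℝ (⊤ : ℕ∞) η U ∧ ∀ p ∈ U, jacDet f p = 0 → fderiv ℝ f p (η p) = 0

/-- The derivative `(ηg)(p) = Dg(p)(η(p))` of `g` along the vector field `η`. -/
def etaD (η : ℝ × ℝ → ℝ × ℝ) (g : ℝ × ℝ → ℝ) : ℝ × ℝ → ℝ :=
  fun p => fderiv ℝ g p (η p)

/-- The iterated derivative `η^k g` along the vector field `η`. -/
def etaIter (η : ℝ × ℝ → ℝ × ℝ) : ℕ → (ℝ × ℝ → ℝ) → ℝ × ℝ → ℝ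
  | 0, g => g
  | k + 1, g => etaD η (etaIter η k g)

/-- The Hessian matrix of second partial derivatives of `g` at `0`. -/
def hess (g : ℝ × ℝ → ℝ) : Matrix (Fin 2) (Fin 2) ℝ :=
  !![pdx (pdx g) 0, pdx (pdy g) 0; pdy (pdx g) 0, pdy (pdy g) 0]

/-- `A^r`-equivalence of the `r`-jets at `0` of two map-germs `(ℝ²,0) → (ℝ²,0)`. -/
def JetEquiv (r : ℕ) (f g : ℝ × ℝ → ℝ × ℝ) : Prop :=
  ∃ φ ψ : ℝ × ℝ → ℝ × ℝ,
    ContDiff ℝ (⊤ : ℕ∞) φ ∧ ContDiff ℝ (⊤ : ℕ∞) ψ ∧ φ 0 = 0 ∧ ψ 0 = 0 ∧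
    Function.Bijective (⇑(fderiv ℝ φ 0)) ∧ Function.Bijective (⇑(fderiv ℝ ψ 0)) ∧
    ∀ i ≤ r, iteratedFDeriv ℝ i (ψ ∘ f ∘ φ) 0 = iteratedFDeriv ℝ i g 0

/-- `A`-equivalence of two map-germs `(ℝ²,0) → (ℝ²,0)`. -/
def AEquiv (f g : ℝ × ℝ → ℝ × ℝ) : Prop :=
  ∃ φ ψ : ℝ × ℝ → ℝ × ℝ,
    ContDiff ℝ (⊤ : ℕ∞) φ ∧ ContDiff ℝ (⊤ : ℕ∞) ψ ∧ φ 0 = 0 ∧ ψ 0 = 0 ∧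
    Function.Bijective (⇑(fderiv ℝ φ 0)) ∧ Function.Bijective (⇑(fderiv ℝ ψ 0)) ∧
    ∀ᶠ p in 𝓝 (0 : ℝ × ℝ), ψ (f (φ p)) = g p

/-- `f` has the form `(x, g(x,y))` where `g` is `C^∞` and the Taylor coefficients of `g`
of total degree `< N` at the origin are prescribed by `P`. -/
def HasForm (f : ℝ × ℝ → ℝ × ℝ) (g : ℝ × ℝ → ℝ) (N : ℕ) (P : ℕ → ℕ → ℝ) : Prop :=
  ContDiff ℝ (⊤ : ℕ∞) g ∧ (∀ p, f p = (p.1, g p)) ∧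
    ∀ i j, i + j < N → tcoeff g i j = P i j

/-!
In suitable coordinates `f` is `(x, y) ↦ (x, g (x, y))`. Its Jacobian determinant is then `Λ = g_y`,
up to a unit and a change of coordinates, so the conditions on `dλ` and `H_λ` are conditions on `Λ`.
To compare the numbers `η^i λ (0)` with `∂_y^i Λ (0)`, follow the integral curve `c` of `η` through
`0`: the first `k` of the former vanish iff `Λ ∘ c = O(t ^ k)`, the first `k` of the latter iff `Λ`
is `O(y ^ k)` on the `y`-axis. The first coordinate `x` of `c` satisfies `x' = H ∘ c`, where `H` is
the first component of `f_* η` and vanishes on `{Λ = 0}`. If `Λ` has a saddle with a branch tangent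
to the `y`-axis, blowing up the origin shows `y H = O(Λ)` along `c`. Hence `Λ ∘ c = O(t ^ k)` gives
`x = O(t ^ k)`, and projecting `c` to the `y`-axis changes `Λ ∘ c` by `O(t ^ (k + 1))` only, so the
two orders agree. If they are equal to `r - 1`, then up to a function of `x` alone
`g = α x y ^ 2 + c y ^ r + x e` with `e` of higher order, and `e` is removed degree by degree.
-/

open Asymptotics Set
open scoped ContDiff

universe w

section Vanishing

variable {E F G : Type*} [NormedAddCommGroup E] [NormedAddCommGroup F] [NormedAddCommGroup G]

/-- `u` vanishes to order `N` at the origin, in the sense `u p = O(‖p‖ ^ N)`. Jets are compared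
through this notion: two smooth germs have the same `r`-jet iff their difference vanishes to
order `r + 1`. -/
def VanishesToOrder (N : ℕ) (u : E → F) : Prop :=
  u =O[𝓝 0] fun p => ‖p‖ ^ N

namespace VanishesToOrder

variable {N M : ℕ}

theorem zero : VanishesToOrder N fun _ : E => (0 : F) :=
  isBigO_zero _ _

theorem congr' {u v : E → F} (hu : VanishesToOrder N u) (h : ∀ᶠ p in 𝓝 0, v p = u p) :
    VanishesToOrder N v :=
  IsBigO.congr' hu (h.mono fun _ hp => hp.symm) .rfl

theorem congr {u v : E → F} (hu : VanishesToOrder N u) (h : ∀ p, v p = u p) :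
    VanishesToOrder N v :=
  hu.congr' (.of_forall h)

theorem add {u v : E → F} (hu : VanishesToOrder N u) (hv : VanishesToOrder N v) :
    VanishesToOrder N fun p => u p + v p :=
  IsBigO.add hu hv

theorem sub {u v : E → F} (hu : VanishesToOrder N u) (hv : VanishesToOrder N v) :
    VanishesToOrder N fun p => u p - v p :=
  IsBigO.sub hu hv

theorem neg {u : E → F} (hu : VanishesToOrder N u) : VanishesToOrder N fun p => -u p :=
  IsBigO.neg_left hu

theorem mono {u : E → F} (hu : VanishesToOrder N u) (h : M ≤ N) : VanishesToOrder M u := by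
  refine IsBigO.trans hu (.of_bound 1 ?_)
  filter_upwards [Metric.ball_mem_nhds (0 : E) one_pos] with p hp
  rw [one_mul, norm_pow, norm_pow, norm_norm]
  exact pow_le_pow_of_le_one (norm_nonneg _) (mem_ball_zero_iff.1 hp).le h

theorem eq_zero {u : E → F} (hu : VanishesToOrder (N + 1) u) : u 0 = 0 :=
  hu.eq_zero_imp.self_of_nhds (by simp)

theorem tendsto_zero {u : E → F} (hu : VanishesToOrder (N + 1) u) : Tendsto u (𝓝 0) (𝓝 0) := by
  have h : Continuous fun p : E => ‖p‖ ^ (N + 1) := by fun_prop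
  exact hu.trans_tendsto (by simpa using h.tendsto 0)

theorem of_continuousAt {u : E → F} (hu : ContinuousAt u 0) : VanishesToOrder 0 u := by
  simpa [VanishesToOrder] using hu.isBigO_one ℝ

theorem of_norm_le {u : E → F} {v : E → G} (hv : VanishesToOrder N v) (h : ∀ p, ‖u p‖ ≤ ‖v p‖) :
    VanishesToOrder N u :=
  (isBigO_of_le _ h).trans hv

theorem fst {u : E → F × G} (hu : VanishesToOrder N u) : VanishesToOrder N fun p => (u p).1 :=
  hu.of_norm_le fun _ => norm_fst_le _

theorem snd {u : E → F × G} (hu : VanishesToOrder N u) : VanishesToOrder N fun p => (u p).2 :=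
  hu.of_norm_le fun _ => norm_snd_le _

theorem prodMk {u : E → F} {v : E → G} (hu : VanishesToOrder N u) (hv : VanishesToOrder N v) :
    VanishesToOrder N fun p => (u p, v p) :=
  IsBigO.prod_left hu hv

theorem isBigO_norm {u : E → F} (hu : VanishesToOrder 1 u) : u =O[𝓝 0] fun p => ‖p‖ := by
  simpa [VanishesToOrder] using hu

theorem comp {u : F → G} {φ : E → F} (hu : VanishesToOrder N u) (hφ : VanishesToOrder 1 φ) :
    VanishesToOrder N fun p => u (φ p) :=
  (IsBigO.comp_tendsto hu hφ.tendsto_zero).trans (hφ.isBigO_norm.norm_left.pow N)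

section Mul

variable {u v : E → ℝ}

theorem mul (hu : VanishesToOrder N u) (hv : VanishesToOrder M v) :
    VanishesToOrder (N + M) fun p => u p * v p :=
  (IsBigO.mul hu hv).congr_right fun _ => (pow_add _ _ _).symm

theorem mul_left (hu : ContinuousAt u 0) (hv : VanishesToOrder N v) :
    VanishesToOrder N fun p => u p * v p := by
  simpa using (of_continuousAt hu).mul hv

theorem const_mul (c : ℝ) (hv : VanishesToOrder N v) : VanishesToOrder N fun p => c * v p :=
  hv.mul_left continuousAt_const

theorem iff_of_eq_mul {w : E → ℝ} (hw : ContinuousAt w 0) (hw0 : w 0 ≠ 0)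
    (h : ∀ᶠ p in 𝓝 0, u p = w p * v p) : VanishesToOrder N u ↔ VanishesToOrder N v := by
  refine ⟨fun hu => (hu.mul_left (hw.inv₀ hw0)).congr' ?_, fun hv => (hv.mul_left hw).congr' h⟩
  filter_upwards [h, hw.eventually_ne hw0] with p hp hwp
  rw [hp, Pi.inv_apply, inv_mul_cancel_left₀ hwp]

theorem pow (hu : VanishesToOrder 1 u) (k : ℕ) : VanishesToOrder k fun p => u p ^ k :=
  (IsBigO.pow hu k).congr_right fun _ => by rw [pow_one]

theorem pow_sub_pow (hu : VanishesToOrder 1 u) (hv : VanishesToOrder 1 v)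
    (h : VanishesToOrder M fun p => u p - v p) (r : ℕ) :
    VanishesToOrder (r - 1 + M) fun p => u p ^ r - v p ^ r := by
  have hsum : VanishesToOrder (r - 1)
      fun p => ∑ i ∈ Finset.range r, u p ^ i * v p ^ (r - 1 - i) :=
    IsBigO.fun_sum fun i hi => ((hu.pow i).mul (hv.pow (r - 1 - i))).mono (by
      have := Finset.mem_range.1 hi
      omega)
  exact (hsum.mul h).congr fun p => ((Commute.all (u p) (v p)).geom_sum₂_mul r).symm

end Mul

end VanishesToOrder

theorem vanishesToOrder_id : VanishesToOrder 1 fun p : E => p := by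
  simpa [VanishesToOrder] using (isBigO_refl (fun p : E => p) (𝓝 0)).norm_right

theorem vanishesToOrder_fst : VanishesToOrder 1 fun p : E × F => p.1 :=
  vanishesToOrder_id.fst

theorem vanishesToOrder_snd : VanishesToOrder 1 fun p : E × F => p.2 :=
  vanishesToOrder_id.snd

variable [NormedSpace ℝ F] [NormedSpace ℝ G]

theorem isBigO_image_sub_of_fderiv {k : ℕ} {e : F → G}
    (hd : ∀ᶠ p in 𝓝 0, DifferentiableAt ℝ e p) (he : VanishesToOrder k (fderiv ℝ e)) :
    (fun q : F × F => e q.1 - e q.2) =O[𝓝 0] fun q => ‖q‖ ^ k * ‖q.1 - q.2‖ := by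
  obtain ⟨C, hC, hbound⟩ := IsBigO.exists_nonneg he
  obtain ⟨ε, hε, hball⟩ := Metric.eventually_nhds_iff_ball.1 (hd.and hbound.bound)
  refine .of_bound C ?_
  filter_upwards [Metric.ball_mem_nhds (0 : F × F) hε] with q hq
  have hmem : ∀ p ∈ Metric.closedBall (0 : F) ‖q‖, p ∈ Metric.ball 0 ε := fun p hp =>
    mem_ball_zero_iff.2 ((mem_closedBall_zero_iff.1 hp).trans_lt (mem_ball_zero_iff.1 hq))
  have key := (convex_closedBall (0 : F) ‖q‖).norm_image_sub_le_of_norm_fderiv_le (𝕜 := ℝ)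
    (C := C * ‖q‖ ^ k) (fun p hp => (hball p (hmem p hp)).1)
    (fun p hp => (hball p (hmem p hp)).2.trans <| by
      rw [norm_pow, norm_norm]
      gcongr
      exact mem_closedBall_zero_iff.1 hp)
    (mem_closedBall_zero_iff.2 (norm_snd_le q)) (mem_closedBall_zero_iff.2 (norm_fst_le q))
  simpa [mul_assoc] using key

namespace VanishesToOrder

variable {N M k : ℕ}

theorem comp_sub {ψ : F → G} {u v : E → F} (hψ : ContDiffAt ℝ 1 ψ 0)
    (hu : Tendsto u (𝓝 0) (𝓝 0)) (hv : Tendsto v (𝓝 0) (𝓝 0))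
    (h : VanishesToOrder N fun p => u p - v p) : VanishesToOrder N fun p => ψ (u p) - ψ (v p) := by
  obtain ⟨K, t, ht, hK⟩ := hψ.exists_lipschitzOnWith
  refine IsBigO.trans (.of_bound K ?_) h
  filter_upwards [hu ht, hv ht] with p hup hvp
  exact hK.norm_sub_le hup hvp

theorem comp_sub_of_fderiv {e : F → G} {u v : E → F}
    (hd : ∀ᶠ p in 𝓝 0, DifferentiableAt ℝ e p) (he : VanishesToOrder k (fderiv ℝ e))
    (hu : VanishesToOrder 1 u) (hv : VanishesToOrder 1 v)
    (huv : VanishesToOrder M fun p => u p - v p) :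
    VanishesToOrder (k + M) fun p => e (u p) - e (v p) := by
  have hprod := hu.prodMk hv
  refine ((isBigO_image_sub_of_fderiv hd he).comp_tendsto hprod.tendsto_zero).trans ?_
  exact ((hprod.isBigO_norm.norm_left.pow k).mul huv.norm_left).congr_right
    fun _ => (pow_add _ _ _).symm

variable [NormedSpace ℝ E]

theorem of_differentiableAt {u : E → F} (hu : DifferentiableAt ℝ u 0) (h0 : u 0 = 0) :
    VanishesToOrder 1 u := by
  simpa [VanishesToOrder, h0] using hu.isBigO_sub.norm_right

theorem of_contDiff {u : E → F} (hu : ContDiff ℝ ∞ u) (h0 : u 0 = 0) : VanishesToOrder 1 u :=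
  of_differentiableAt (hu.contDiffAt.differentiableAt (by simp)) h0

theorem of_fderiv {u : E → F} (h0 : u 0 = 0) (hd : ∀ᶠ p in 𝓝 0, DifferentiableAt ℝ u p)
    (h : VanishesToOrder N (fderiv ℝ u)) : VanishesToOrder (N + 1) u := by
  have hsub : VanishesToOrder 1 fun p : E => p - 0 := by
    simpa only [sub_zero] using vanishesToOrder_id
  simpa [h0] using comp_sub_of_fderiv hd h vanishesToOrder_id zero hsub

theorem sub_fderiv {u : E → F} (hu : ContDiff ℝ ∞ u) (h0 : u 0 = 0) :
    VanishesToOrder 2 fun p => u p - fderiv ℝ u 0 p := by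
  have hdiff : Differentiable ℝ u := hu.differentiable (by simp)
  refine .of_fderiv (by simp [h0]) (.of_forall fun p => by fun_prop)
    ((of_contDiff ((hu.fderiv_right (m := ∞) (by simp)).sub contDiff_const)
      (sub_self (fderiv ℝ u 0))).congr fun p => ?_)
  exact ((hdiff p).hasFDerivAt.sub (fderiv ℝ u 0).hasFDerivAt).fderiv

end VanishesToOrder

end Vanishing

section DerivChain

variable {F : Type*} [NormedAddCommGroup F] [NormedSpace ℝ F] {μ : ℕ → ℝ → F}

/-- A sequence of functions of one variable, each the derivative of the preceding one near `0`.
It plays the role of the iterated derivatives of `μ 0`, which here come in different guises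
(partial derivatives on an axis, iterated Lie derivatives along an integral curve). -/
def IsDerivChain (μ : ℕ → ℝ → F) : Prop :=
  ∀ i, ∀ᶠ t in 𝓝 0, HasDerivAt (μ i) (μ (i + 1) t) t

theorem VanishesToOrder.of_hasDerivAt {N : ℕ} {u v : ℝ → F} (h0 : u 0 = 0)
    (hd : ∀ᶠ t in 𝓝 0, HasDerivAt u (v t) t) (hv : VanishesToOrder N v) :
    VanishesToOrder (N + 1) u := by
  refine of_fderiv h0 (hd.mono fun t ht => ht.differentiableAt) (IsBigO.trans (.of_bound 1 ?_) hv)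
  filter_upwards [hd] with t ht
  rw [← norm_deriv_eq_norm_fderiv, ht.deriv, one_mul]

theorem eq_zero_of_vanishesToOrder_pow_smul {a : F} {i : ℕ} {y : ℝ → ℝ}
    (hy : (fun t : ℝ => t) =O[𝓝 0] y) (h : VanishesToOrder (i + 1) fun t => y t ^ i • a) :
    a = 0 := by
  by_contra ha
  have hle : (fun t : ℝ => t ^ i) =O[𝓝 0] fun t => y t ^ i • a :=
    (hy.pow i).trans (.of_bound ‖a‖⁻¹ (.of_forall fun t => by
      rw [norm_smul, mul_comm ‖y t ^ i‖, inv_mul_cancel_left₀ (norm_ne_zero_iff.2 ha)]))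
  have hpow : (fun t : ℝ => t ^ i) =O[𝓝 0] fun t : ℝ => t ^ (i + 1) :=
    (hle.trans h).trans (.of_bound 1 (.of_forall fun t => by simp))
  have hne : ∃ᶠ t : ℝ in 𝓝[≠] 0, t ^ i ≠ 0 :=
    ((eventually_mem_nhdsWithin (s := {0}ᶜ)).mono fun t ht => pow_ne_zero i ht).frequently
  exact (hpow.trans_isLittleO (isLittleO_pow_pow i.lt_succ_self)).not_isBigO
    (hne.filter_mono nhdsWithin_le_nhds) (isBigO_refl _ _)

namespace IsDerivChain

theorem tail (hμ : IsDerivChain μ) : IsDerivChain fun i => μ (i + 1) :=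
  fun i => hμ (i + 1)

theorem taylor {k : ℕ} (hμ : IsDerivChain μ) (h : ∀ i < k, μ i 0 = 0) :
    VanishesToOrder (k + 1) fun t => μ 0 t - t ^ k • (k.factorial : ℝ)⁻¹ • μ k 0 := by
  induction k generalizing μ with
  | zero =>
    have hdiff := (hμ 0).self_of_nhds.differentiableAt
    exact .of_differentiableAt (by simp only [pow_zero, one_smul]; fun_prop) (by simp)
  | succ k ih =>
    refine .of_hasDerivAt (by simp [h 0 (by omega)]) ?_
      (ih hμ.tail fun i hi => h (i + 1) (by omega))
    filter_upwards [hμ 0] with t ht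
    refine (ht.sub ((hasDerivAt_pow (k + 1) t).smul_const _)).congr_deriv ?_
    rw [smul_smul, smul_smul, Nat.factorial_succ, Nat.add_sub_cancel]
    push_cast
    congr 2
    field_simp

theorem vanishesToOrder {k : ℕ} (hμ : IsDerivChain μ) (h : ∀ i < k, μ i 0 = 0) :
    VanishesToOrder k (μ 0) := by
  induction k generalizing μ with
  | zero => exact .of_continuousAt (hμ 0).self_of_nhds.continuousAt
  | succ k ih =>
    exact .of_hasDerivAt (h 0 (by omega)) (hμ 0) (ih hμ.tail fun i hi => h (i + 1) (by omega))

theorem vanishesToOrder_comp_iff {k : ℕ} (hμ : IsDerivChain μ) {y : ℝ → ℝ}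
    (hy : VanishesToOrder 1 y) (hy' : (fun t : ℝ => t) =O[𝓝 0] y) :
    (VanishesToOrder k fun t => μ 0 (y t)) ↔ ∀ i < k, μ i 0 = 0 := by
  refine ⟨fun h => ?_, fun h => (hμ.vanishesToOrder h).comp hy⟩
  induction k with
  | zero => simp
  | succ k ih =>
    have hlt := ih (h.mono k.le_succ)
    have hk : μ k 0 = 0 := by
      have hlead := eq_zero_of_vanishesToOrder_pow_smul hy'
        ((h.sub ((hμ.taylor hlt).comp hy)).congr fun t => by rw [sub_sub_cancel])
      simpa [Nat.factorial_ne_zero] using hlead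
    exact fun i hi => (Nat.lt_succ_iff_lt_or_eq.1 hi).elim (hlt i) (· ▸ hk)

theorem vanishesToOrder_iff {k : ℕ} (hμ : IsDerivChain μ) :
    VanishesToOrder k (μ 0) ↔ ∀ i < k, μ i 0 = 0 :=
  hμ.vanishesToOrder_comp_iff vanishesToOrder_id (isBigO_refl _ _)

end IsDerivChain

end DerivChain

section Jets

variable {E F : Type*} [NormedAddCommGroup E] [NormedSpace ℝ E]
  [NormedAddCommGroup F] [NormedSpace ℝ F] {N : ℕ}

theorem VanishesToOrder.tendsto_rescale {u : E → F} (hu : VanishesToOrder (N + 1) u) (x : E) :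
    Tendsto (fun q : ℝ × E => (q.1 ^ N)⁻¹ • u (q.1 • q.2)) (𝓝[≠] 0 ×ˢ 𝓝 x) (𝓝 0) := by
  have hle : 𝓝[≠] 0 ×ˢ 𝓝 x ≤ 𝓝 ((0 : ℝ), x) :=
    (Filter.prod_mono_left _ nhdsWithin_le_nhds).trans nhds_prod_eq.ge
  have hsmul : Tendsto (fun q : ℝ × E => q.1 • q.2) (𝓝[≠] 0 ×ˢ 𝓝 x) (𝓝 0) := by
    have hcont : Continuous fun q : ℝ × E => q.1 • q.2 := by fun_prop
    simpa using (hcont.tendsto (0, x)).mono_left hle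
  have hlim : Tendsto (fun q : ℝ × E => |q.1| * ‖q.2‖ ^ (N + 1)) (𝓝[≠] 0 ×ˢ 𝓝 x) (𝓝 0) := by
    have hcont : Continuous fun q : ℝ × E => |q.1| * ‖q.2‖ ^ (N + 1) := by fun_prop
    simpa using (hcont.tendsto (0, x)).mono_left hle
  refine (((isBigO_refl (fun q : ℝ × E => (q.1 ^ N)⁻¹) _).norm_right.smul
    (hu.comp_tendsto hsmul)).congr' .rfl ?_).trans_tendsto hlim
  filter_upwards [tendsto_fst.eventually (eventually_mem_nhdsWithin (s := {0}ᶜ))] with q hq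
  have hpos : 0 < |q.1| := abs_pos.2 hq
  simp only [Function.comp_apply, norm_smul, smul_eq_mul, norm_inv, norm_pow, Real.norm_eq_abs]
  rw [mul_pow, pow_succ |q.1|]
  field_simp

theorem vanishesToOrder_sub_taylor [CompleteSpace F] {u : E → F} (hu : ContDiff ℝ ∞ u) (N : ℕ) :
    VanishesToOrder (N + 1) fun p => u p -
      ∑ i ∈ Finset.range (N + 1), (i.factorial : ℝ)⁻¹ • iteratedFDeriv ℝ i u 0 fun _ => p := by
  have hcont : Continuous (iteratedFDeriv ℝ (N + 1) u) :=
    hu.continuous_iteratedFDeriv (by exact_mod_cast le_top)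
  obtain ⟨C, hC⟩ := (hcont.continuousAt (x := 0)).isBigO_one ℝ |>.bound
  obtain ⟨ε, hε, hball⟩ := Metric.eventually_nhds_iff_ball.1 hC
  refine .of_bound ((N.factorial : ℝ)⁻¹ * C) ?_
  filter_upwards [Metric.ball_mem_nhds (0 : E) hε] with p hp
  have hrem := map_add_eq_sum_add_integral_iteratedFDeriv (f := u) (x := 0) (y := p) (n := N)
    fun t _ => (hu.of_le (by exact_mod_cast le_top)).contDiffAt
  rw [zero_add] at hrem
  rw [hrem, add_sub_cancel_left, norm_smul, norm_inv, Real.norm_natCast, mul_assoc]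
  gcongr
  refine (intervalIntegral.norm_integral_le_of_norm_le_const (C := C * ‖p‖ ^ (N + 1))
    fun t ht => ?_).trans_eq (by simp)
  rw [Set.uIoc_of_le zero_le_one] at ht
  have hmem : t • p ∈ Metric.ball (0 : E) ε := by
    rw [mem_ball_zero_iff] at hp ⊢
    rw [norm_smul, Real.norm_of_nonneg ht.1.le]
    exact (mul_le_of_le_one_left (norm_nonneg p) ht.2).trans_lt hp
  have hder : ‖iteratedFDeriv ℝ (N + 1) u (0 + t • p) fun _ => p‖ ≤ C * ‖p‖ ^ (N + 1) := by
    refine (ContinuousMultilinearMap.le_opNorm _ _).trans ?_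
    rw [zero_add, Finset.prod_const, Finset.card_univ, Fintype.card_fin]
    gcongr
    simpa using hball _ hmem
  have hle : ‖(1 - t) ^ N‖ ≤ 1 := by
    rw [norm_pow, Real.norm_of_nonneg (by linarith [ht.2])]
    exact pow_le_one₀ (by linarith [ht.2]) (by linarith [ht.1])
  rw [norm_smul]
  exact (mul_le_of_le_one_left (norm_nonneg _) hle).trans hder

theorem iteratedFDeriv_smul_diagonal (u : E → F) (i : ℕ) (t : ℝ) (p : E) :
    (iteratedFDeriv ℝ i u 0 fun _ => t • p) = t ^ i • iteratedFDeriv ℝ i u 0 fun _ => p := by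
  simpa using (iteratedFDeriv ℝ i u 0).map_smul_univ (fun _ => t) fun _ => p

theorem VanishesToOrder.iteratedFDeriv_diagonal_eq_zero [CompleteSpace F] {u : E → F}
    (hu : ContDiff ℝ ∞ u) (h : VanishesToOrder N u) :
    ∀ i < N, ∀ p, (iteratedFDeriv ℝ i u 0 fun _ => p) = 0 := by
  induction N with
  | zero => simp
  | succ N ih =>
    have hlt := ih (h.mono N.le_succ)
    intro i hi p
    rcases Nat.lt_succ_iff_lt_or_eq.1 hi with hi | rfl
    · exact hlt i hi p
    have hline : VanishesToOrder 1 fun t : ℝ => t • p :=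
      .of_differentiableAt (by fun_prop) (zero_smul _ _)
    have hlead := (h.sub (vanishesToOrder_sub_taylor hu i)).comp hline
    have hcoeff : (i.factorial : ℝ)⁻¹ • (iteratedFDeriv ℝ i u 0 fun _ => p) = 0 := by
      refine eq_zero_of_vanishesToOrder_pow_smul (isBigO_refl _ _) (hlead.congr fun t => ?_)
      rw [sub_sub_cancel, Finset.sum_range_succ, Finset.sum_eq_zero fun j hj => by
        rw [hlt j (Finset.mem_range.1 hj), smul_zero], zero_add, iteratedFDeriv_smul_diagonal,
        smul_comm]
    simpa [Nat.factorial_ne_zero] using hcoeff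

theorem VanishesToOrder.sub_leading [CompleteSpace F] {u : E → F} (hu : ContDiff ℝ ∞ u)
    (h : VanishesToOrder N u) :
    VanishesToOrder (N + 1) fun p =>
      u p - (N.factorial : ℝ)⁻¹ • iteratedFDeriv ℝ N u 0 fun _ => p := by
  refine (vanishesToOrder_sub_taylor hu N).congr fun p => ?_
  rw [Finset.sum_range_succ, Finset.sum_eq_zero fun j hj => by
    rw [h.iteratedFDeriv_diagonal_eq_zero hu j (Finset.mem_range.1 hj), smul_zero], zero_add]

-- The rescaled maps `u (t • p) / t ^ (N + 2)` tend to `0`, while their derivatives tend to `A`.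
theorem eq_zero_of_vanishesToOrder_fderiv_sub {u : E → F} {A : E → E →L[ℝ] F}
    (hd : Differentiable ℝ u) (hu : VanishesToOrder (N + 2) u)
    (hA : ∀ (t : ℝ) p, A (t • p) = t ^ N • A p)
    (h : VanishesToOrder (N + 1) fun p => fderiv ℝ u p - A p) (p : E) : A p = 0 := by
  have hderiv : ∀ᶠ q : ℝ × E in 𝓝[≠] 0 ×ˢ 𝓝 p, HasFDerivAt
      (fun y => (q.1 ^ (N + 1))⁻¹ • u (q.1 • y)) ((q.1 ^ N)⁻¹ • fderiv ℝ u (q.1 • q.2)) q.2 := by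
    filter_upwards [tendsto_fst.eventually (eventually_mem_nhdsWithin (s := {0}ᶜ))] with q hq
    have hcomp := ((hd (q.1 • q.2)).hasFDerivAt.comp q.2
      ((hasFDerivAt_id q.2).const_smul q.1)).const_smul (q.1 ^ (N + 1))⁻¹
    refine hcomp.congr_fderiv ?_
    rw [ContinuousLinearMap.comp_smul, ContinuousLinearMap.comp_id, smul_smul, pow_succ, mul_inv,
      inv_mul_cancel_right₀ hq]
  have hunif : TendstoUniformlyOnFilter
      (fun (t : ℝ) y => (t ^ N)⁻¹ • fderiv ℝ u (t • y)) A (𝓝[≠] 0) (𝓝 p) := by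
    refine Metric.tendstoUniformlyOnFilter_iff.2 fun ε hε => ?_
    filter_upwards [(Metric.tendsto_nhds.1 (h.tendsto_rescale p)) ε hε,
      tendsto_fst.eventually (eventually_mem_nhdsWithin (s := {0}ᶜ))] with q hq hq0
    rwa [hA, smul_sub, inv_smul_smul₀ (pow_ne_zero N hq0), dist_zero_right, ← dist_eq_norm,
      dist_comm] at hq
  have hlim : ∀ y, Tendsto (fun t : ℝ => (t ^ (N + 1))⁻¹ • u (t • y)) (𝓝[≠] 0) (𝓝 0) := fun y =>
    (hu.tendsto_rescale y).comp (tendsto_id.prodMk tendsto_const_nhds)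
  exact (hasFDerivAt_of_tendstoUniformlyOnFilter hunif hderiv (.of_forall hlim)).unique
    (hasFDerivAt_const 0 p)

namespace VanishesToOrder

variable [CompleteSpace F] {u : E → F}

theorem fderiv (hu : ContDiff ℝ ∞ u) (h : VanishesToOrder (N + 1) u) :
    VanishesToOrder N (_root_.fderiv ℝ u) := by
  have hu' : ContDiff ℝ ∞ (_root_.fderiv ℝ u) := hu.fderiv_right (by simp)
  induction N with
  | zero => exact .of_continuousAt hu'.continuous.continuousAt
  | succ N ih =>
    have hlead := (ih (h.mono (N + 1).le_succ)).sub_leading hu'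
    have hzero := eq_zero_of_vanishesToOrder_fderiv_sub (hu.differentiable (by simp)) h
      (fun t p => by rw [iteratedFDeriv_smul_diagonal, smul_comm]) hlead
    exact hlead.congr fun p => by rw [hzero, sub_zero]

end VanishesToOrder

theorem vanishesToOrder_two_iff [CompleteSpace F] {u : E → F} (hu : ContDiff ℝ ∞ u) :
    VanishesToOrder 2 u ↔ u 0 = 0 ∧ fderiv ℝ u 0 = 0 := by
  refine ⟨fun h => ⟨h.eq_zero, (h.fderiv hu).eq_zero⟩, fun ⟨h0, hd⟩ => ?_⟩
  simpa [hd] using VanishesToOrder.sub_fderiv hu h0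

end Jets

theorem vanishesToOrder_iff_iteratedFDeriv {E F : Type w} [NormedAddCommGroup E] [NormedSpace ℝ E]
    [NormedAddCommGroup F] [NormedSpace ℝ F] [CompleteSpace F] {N : ℕ} {u : E → F}
    (hu : ContDiff ℝ ∞ u) :
    VanishesToOrder N u ↔ ∀ i < N, iteratedFDeriv ℝ i u 0 = 0 := by
  induction N generalizing F with
  | zero => simp [VanishesToOrder.of_continuousAt hu.continuous.continuousAt]
  | succ N ih =>
    have hsucc : (∀ i < N + 1, iteratedFDeriv ℝ i u 0 = 0) ↔
        u 0 = 0 ∧ ∀ i < N, iteratedFDeriv ℝ i (fderiv ℝ u) 0 = 0 := by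
      simp only [← norm_eq_zero (a := iteratedFDeriv ℝ _ _ _), norm_iteratedFDeriv_fderiv,
        ← norm_eq_zero (a := u 0)]
      rw [← norm_iteratedFDeriv_zero (𝕜 := ℝ)]
      exact Nat.forall_lt_succ_left
    rw [hsucc, ← ih (hu.fderiv_right (by simp))]
    exact ⟨fun h => ⟨h.eq_zero, h.fderiv hu⟩, fun h => .of_fderiv h.1
      (.of_forall (hu.differentiable (by simp))) h.2⟩

section PartialDerivatives

variable {u v : ℝ × ℝ → ℝ} {N : ℕ}

theorem fderiv_apply_eq_pdx_add_pdy (u : ℝ × ℝ → ℝ) (p v : ℝ × ℝ) :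
    fderiv ℝ u p v = v.1 * pdx u p + v.2 * pdy u p := by
  have hv : v = v.1 • ((1, 0) : ℝ × ℝ) + v.2 • ((0, 1) : ℝ × ℝ) := by ext <;> simp
  conv_lhs => rw [hv, map_add, map_smul, map_smul]
  rfl

theorem contDiff_dop (hu : ContDiff ℝ ∞ u) (v : ℝ × ℝ) : ContDiff ℝ ∞ (dop v u) :=
  (hu.fderiv_right (by simp)).clm_apply contDiff_const

theorem contDiff_pdy (hu : ContDiff ℝ ∞ u) : ContDiff ℝ ∞ (pdy u) :=
  contDiff_dop hu _

theorem contDiff_iterate_pdy (hu : ContDiff ℝ ∞ u) (k : ℕ) : ContDiff ℝ ∞ (pdy^[k] u) := by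
  induction k with
  | zero => exact hu
  | succ k ih => rw [Function.iterate_succ_apply']; exact contDiff_pdy ih

theorem hasDerivAt_pdy (hu : ContDiff ℝ ∞ u) (x y : ℝ) :
    HasDerivAt (fun s => u (x, s)) (pdy u (x, y)) y :=
  (hu.differentiable (by simp) (x, y)).hasFDerivAt.comp_hasDerivAt y
    ((hasDerivAt_const y x).prodMk (hasDerivAt_id y))

theorem pdy_eq_of_hasDerivAt (hu : ContDiff ℝ ∞ u) {p : ℝ × ℝ} {a : ℝ}
    (h : HasDerivAt (fun s => u (p.1, s)) a p.2) : pdy u p = a :=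
  (hasDerivAt_pdy hu p.1 p.2).unique h

theorem isDerivChain_iterate_pdy (hu : ContDiff ℝ ∞ u) :
    IsDerivChain fun i t => pdy^[i] u (0, t) := fun i => .of_forall fun t => by
  simpa only [Function.iterate_succ_apply'] using hasDerivAt_pdy (contDiff_iterate_pdy hu i) 0 t

theorem dop_dop_eq (hu : ContDiff ℝ ∞ u) (v w p : ℝ × ℝ) :
    dop v (dop w u) p = fderiv ℝ (fderiv ℝ u) p v w := by
  have hdiff : DifferentiableAt ℝ (fderiv ℝ u) p :=
    (hu.fderiv_right (m := ∞) (by simp)).differentiable (by simp) p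
  change fderiv ℝ (fun q => fderiv ℝ u q w) p v = _
  rw [fderiv_clm_apply hdiff (differentiableAt_const w)]
  simp

theorem pdx_pdy_comm (hu : ContDiff ℝ ∞ u) (p : ℝ × ℝ) : pdx (pdy u) p = pdy (pdx u) p := by
  have hsymm : IsSymmSndFDerivAt ℝ u p := hu.contDiffAt.isSymmSndFDerivAt <| by
    rw [minSmoothness_of_isRCLikeNormedField]
    exact WithTop.coe_le_coe.2 le_top
  rw [pdx, pdy, dop_dop_eq hu, dop_dop_eq hu, hsymm.eq]

theorem vanishesToOrder_succ_iff (hu : ContDiff ℝ ∞ u) :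
    VanishesToOrder (N + 1) u ↔
      u 0 = 0 ∧ VanishesToOrder N (pdx u) ∧ VanishesToOrder N (pdy u) := by
  refine ⟨fun h => ⟨h.eq_zero, ?_⟩, fun ⟨h0, hx, hy⟩ => ?_⟩
  · have heval : ∀ v, VanishesToOrder N (dop v u) := fun v =>
      (ContinuousLinearMap.apply ℝ ℝ v).isBigO_comp _ _ |>.trans (h.fderiv hu)
    exact ⟨heval _, heval _⟩
  · refine .of_fderiv h0 (.of_forall (hu.differentiable (by simp))) ?_
    refine IsBigO.trans (.of_bound 1 (.of_forall fun p => ?_)) (hx.norm_left.add hy.norm_left)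
    rw [one_mul, Real.norm_of_nonneg (by positivity)]
    refine ContinuousLinearMap.opNorm_le_bound _ (by positivity) fun v => ?_
    rw [fderiv_apply_eq_pdx_add_pdy, add_mul, mul_comm ‖pdx u p‖, mul_comm ‖pdy u p‖]
    refine (norm_add_le _ _).trans ?_
    rw [norm_mul, norm_mul]
    gcongr
    · exact norm_fst_le v
    · exact norm_snd_le v

/-- The second order Taylor polynomial of `u` at the origin when `u` vanishes there to order 2. -/
def hessForm (u : ℝ × ℝ → ℝ) (p : ℝ × ℝ) : ℝ :=
  pdx (pdx u) 0 / 2 * p.1 ^ 2 + pdx (pdy u) 0 * (p.1 * p.2) + pdy (pdy u) 0 / 2 * p.2 ^ 2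

theorem vanishesToOrder_sub_hessForm (hu : ContDiff ℝ ∞ u) (h : VanishesToOrder 2 u) :
    VanishesToOrder 3 fun p => u p - hessForm u p := by
  refine (h.sub_leading hu).congr fun p => ?_
  have hp : p = p.1 • ((1, 0) : ℝ × ℝ) + p.2 • ((0, 1) : ℝ × ℝ) := by ext <;> simp
  have hquad : fderiv ℝ (fderiv ℝ u) 0 p p = pdx (pdx u) 0 * p.1 ^ 2 +
      2 * pdx (pdy u) 0 * (p.1 * p.2) + pdy (pdy u) 0 * p.2 ^ 2 := by
    conv_lhs => rw [hp]
    simp only [map_add, map_smul, add_apply, smul_apply,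
      smul_eq_mul, ← dop_dop_eq hu]
    change p.1 * (p.1 * pdx (pdx u) 0 + p.2 * pdy (pdx u) 0) +
      p.2 * (p.1 * pdx (pdy u) 0 + p.2 * pdy (pdy u) 0) = _
    rw [← pdx_pdy_comm hu]
    ring
  rw [iteratedFDeriv_two_apply, hquad, hessForm, Nat.factorial_two, smul_eq_mul]
  ring

theorem hessForm_coeff_eq {a b c : ℝ} (hu : ContDiff ℝ ∞ u)
    (h : VanishesToOrder 2 u)
    (h3 : VanishesToOrder 3 fun p => u p - (a * p.1 ^ 2 + b * (p.1 * p.2) + c * p.2 ^ 2)) :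
    pdx (pdx u) 0 / 2 = a ∧ pdx (pdy u) 0 = b ∧ pdy (pdy u) 0 / 2 = c := by
  have hline : ∀ ξ υ : ℝ, hessForm u (ξ, υ) = a * ξ ^ 2 + b * (ξ * υ) + c * υ ^ 2 := fun ξ υ => by
    have hsmul : VanishesToOrder 1 fun t : ℝ => (t * ξ, t * υ) :=
      .of_contDiff (by fun_prop) (by simp)
    refine sub_eq_zero.1 (eq_zero_of_vanishesToOrder_pow_smul (isBigO_refl _ _) (i := 2)
      (((h3.sub (vanishesToOrder_sub_hessForm hu h)).comp hsmul).congr fun t => ?_))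
    simp only [hessForm, smul_eq_mul]
    ring
  have h₁ := hline 1 0
  have h₂ := hline 0 1
  have h₃ := hline 1 1
  simp only [hessForm] at h₁ h₂ h₃
  exact ⟨by linarith, by linarith, by linarith⟩

end PartialDerivatives

section Jacobian

variable {f g : ℝ × ℝ → ℝ × ℝ} {p : ℝ × ℝ}

theorem jacDet_eq_det (f : ℝ × ℝ → ℝ × ℝ) (p : ℝ × ℝ) :
    jacDet f p = LinearMap.det (fderiv ℝ f p : ℝ × ℝ →ₗ[ℝ] ℝ × ℝ) := by
  rw [← LinearMap.det_toMatrix (Module.Basis.finTwoProd ℝ), Matrix.det_fin_two]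
  simp [LinearMap.toMatrix_apply, jacDet, mul_comm]

theorem jacDet_comp (hf : DifferentiableAt ℝ f (g p)) (hg : DifferentiableAt ℝ g p) :
    jacDet (f ∘ g) p = jacDet f (g p) * jacDet g p := by
  simp only [jacDet_eq_det]
  rw [fderiv_comp p hf hg, ContinuousLinearMap.toLinearMap_comp, LinearMap.det_comp]

theorem jacDet_ne_zero_iff_bijective :
    jacDet f p ≠ 0 ↔ Function.Bijective (fderiv ℝ f p) := by
  rw [jacDet_eq_det, ← isUnit_iff_ne_zero, ← LinearMap.isUnit_iff_isUnit_det]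
  exact Module.End.isUnit_iff _

theorem contDiff_jacDet (hf : ContDiff ℝ ∞ f) : ContDiff ℝ ∞ (jacDet f) := by
  have : ContDiff ℝ ∞ (fderiv ℝ f) := hf.fderiv_right (by simp)
  unfold jacDet
  fun_prop

theorem jacDet_fst_prodMk {u : ℝ × ℝ → ℝ} (hu : Differentiable ℝ u) (p : ℝ × ℝ) :
    jacDet (fun q => (q.1, u q)) p = pdy u p := by
  have h := (hasFDerivAt_fst (𝕜 := ℝ) (p := p)).prodMk (hu p).hasFDerivAt
  simp [jacDet, h.fderiv, pdy, dop]

end Jacobian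

section DiffeoGerms

variable {E : Type*} [NormedAddCommGroup E] [NormedSpace ℝ E]

theorem exists_contDiff_eventuallyEq [FiniteDimensional ℝ E] {F : Type*} [NormedAddCommGroup F]
    [NormedSpace ℝ F] {u : E → F} {a : E} (hu : ∀ᶠ p in 𝓝 a, ContDiffAt ℝ ∞ u p) :
    ∃ v, ContDiff ℝ ∞ v ∧ v =ᶠ[𝓝 a] u := by
  obtain ⟨ε, hε, hball⟩ := Metric.eventually_nhds_iff_ball.1 hu
  let b : ContDiffBump a := ⟨ε / 4, ε / 2, by positivity, by linarith⟩
  refine ⟨fun p => b p • u p, contMDiff_iff_contDiff.1 <|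
    contMDiff_of_tsupport fun p hp => ContDiffAt.contMDiffAt ?_, ?_⟩
  · have hmem := tsupport_smul_subset_left _ _ hp
    rw [b.tsupport_eq] at hmem
    exact b.contDiffAt.smul (hball p (Metric.closedBall_subset_ball (half_lt_self hε) hmem))
  · filter_upwards [b.eventuallyEq_one] with p hp
    rw [hp, Pi.one_apply, one_smul]

/-- Smooth maps fixing the origin with invertible derivative there: the coordinate changes
of `JetEquiv`. -/
structure IsDiffeoGerm (φ : E → E) : Prop where
  contDiff : ContDiff ℝ ∞ φ
  map_zero : φ 0 = 0
  bijective : Function.Bijective (fderiv ℝ φ 0)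

namespace IsDiffeoGerm

variable {φ ψ : E → E}

theorem of_continuousLinearEquiv (L : E ≃L[ℝ] E) : IsDiffeoGerm L where
  contDiff := L.contDiff
  map_zero := _root_.map_zero L
  bijective := by rw [L.fderiv]; exact L.bijective

theorem of_sub_id [CompleteSpace E] (hφ : ContDiff ℝ ∞ φ) (h : VanishesToOrder 2 fun p => φ p - p) :
    IsDiffeoGerm φ where
  contDiff := hφ
  map_zero := by simpa using h.eq_zero
  bijective := by
    have hderiv := (h.fderiv (hφ.sub contDiff_id)).eq_zero
    rw [fderiv_fun_sub (hφ.differentiable (by simp) 0) differentiableAt_id, fderiv_id,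
      sub_eq_zero] at hderiv
    rw [hderiv]
    exact Function.bijective_id

theorem vanishesToOrder (hφ : IsDiffeoGerm φ) : VanishesToOrder 1 φ :=
  .of_contDiff hφ.contDiff hφ.map_zero

theorem const_mul_prodMk {a b : ℝ} (ha : a ≠ 0) (hb : b ≠ 0) :
    IsDiffeoGerm fun p : ℝ × ℝ => (a * p.1, b * p.2) := by
  let L : (ℝ × ℝ) ≃L[ℝ] ℝ × ℝ := (ContinuousLinearEquiv.smulLeft (Units.mk0 a ha)).prodCongr
    (ContinuousLinearEquiv.smulLeft (Units.mk0 b hb))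
  exact of_continuousLinearEquiv L

theorem comp (hψ : IsDiffeoGerm ψ) (hφ : IsDiffeoGerm φ) : IsDiffeoGerm fun p => ψ (φ p) where
  contDiff := hψ.contDiff.comp hφ.contDiff
  map_zero := by rw [hφ.map_zero, hψ.map_zero]
  bijective := by
    have hchain := fderiv_fun_comp (0 : E) (hψ.contDiff.differentiable (by simp) (φ 0))
      (hφ.contDiff.differentiable (by simp) 0)
    rw [hchain, hφ.map_zero]
    exact hψ.bijective.comp hφ.bijective

theorem of_rightInverse {χ : E → E} (hφ : IsDiffeoGerm φ) (hχ : ContDiff ℝ ∞ χ) (hχ0 : χ 0 = 0)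
    (h : ∀ᶠ q in 𝓝 0, φ (χ q) = q) : IsDiffeoGerm χ where
  contDiff := hχ
  map_zero := hχ0
  bijective := by
    have hchain : fderiv ℝ φ 0 ∘ fderiv ℝ χ 0 = id := by
      have h' := fderiv_fun_comp (0 : E) (hφ.contDiff.differentiable (by simp) (χ 0))
        (hχ.differentiable (by simp) 0)
      rw [hχ0, EventuallyEq.fderiv_eq (f := id) h, fderiv_id] at h'
      exact congrArg DFunLike.coe h'.symm
    exact (Function.Bijective.of_comp_iff' hφ.bijective _).1 (hchain ▸ Function.bijective_id)

theorem exists_inverse [FiniteDimensional ℝ E] (hφ : IsDiffeoGerm φ) :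
    ∃ χ, IsDiffeoGerm χ ∧ (∀ᶠ q in 𝓝 0, φ (χ q) = q) ∧ ∀ᶠ p in 𝓝 0, χ (φ p) = p := by
  have : CompleteSpace E := FiniteDimensional.complete ℝ E
  have hdiff : Differentiable ℝ φ := hφ.contDiff.differentiable (by simp)
  let L : E ≃L[ℝ] E := .ofBijective (fderiv ℝ φ 0) (LinearMap.ker_eq_bot.2 hφ.bijective.1)
    (LinearMap.range_eq_top.2 hφ.bijective.2)
  have hstrict : HasStrictFDerivAt φ (L : E →L[ℝ] E) 0 :=
    hφ.contDiff.contDiffAt.hasStrictFDerivAt (by simp)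
  have hzero := hstrict.localInverse_apply_image
  have hcont := hstrict.localInverse_continuousAt
  have hright := hstrict.eventually_right_inverse
  have htarget := (hstrict.toOpenPartialHomeomorph φ).open_target.mem_nhds
    hstrict.image_mem_toOpenPartialHomeomorph_target
  rw [hφ.map_zero] at hzero hcont hright htarget
  have hinvertible : ∀ᶠ q in 𝓝 0, ∃ A : E ≃L[ℝ] E,
      (A : E →L[ℝ] E) = fderiv ℝ φ (hstrict.localInverse φ _ _ q) :=
    ((hφ.contDiff.continuous_fderiv (by simp)).continuousAt.comp hcont).eventually_mem <| by
      rw [Function.comp_apply, hzero]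
      exact ContinuousLinearEquiv.nhds L
  obtain ⟨χ, hχ, hχeq⟩ := exists_contDiff_eventuallyEq <| by
    filter_upwards [htarget, hinvertible] with q hq ⟨A, hA⟩
    exact (hstrict.toOpenPartialHomeomorph φ).contDiffAt_symm hq
      (by rw [hA]; exact (hdiff _).hasFDerivAt) hφ.contDiff.contDiffAt
  have hχ0 : χ 0 = 0 := hχeq.self_of_nhds.trans hzero
  have hright' : ∀ᶠ q in 𝓝 0, φ (χ q) = q := by
    filter_upwards [hright, hχeq] with q hq hχq
    rw [hχq]
    exact hq
  have hleft : ∀ᶠ p in 𝓝 0, χ (φ p) = p := by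
    filter_upwards [hstrict.eventually_left_inverse,
      hφ.vanishesToOrder.tendsto_zero.eventually hχeq] with p hp hχp
    exact hχp.trans hp
  exact ⟨χ, hφ.of_rightInverse hχ hχ0 hright', hright', hleft⟩

theorem jacDet_ne_zero {φ : ℝ × ℝ → ℝ × ℝ} (hφ : IsDiffeoGerm φ) : jacDet φ 0 ≠ 0 :=
  jacDet_ne_zero_iff_bijective.2 hφ.bijective

theorem fst_prodMk {k : ℝ × ℝ → ℝ} (hk : ContDiff ℝ ∞ k) (hk0 : k 0 = 0) (hky : pdy k 0 ≠ 0) :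
    IsDiffeoGerm fun p => (p.1, k p) where
  contDiff := contDiff_fst.prodMk hk
  map_zero := by rw [hk0]; rfl
  bijective := by
    rwa [← jacDet_ne_zero_iff_bijective, jacDet_fst_prodMk (hk.differentiable (by simp))]

end IsDiffeoGerm

end DiffeoGerms

section JetEquiv

variable {r : ℕ} {f g h : ℝ × ℝ → ℝ × ℝ}

theorem jetEquiv_iff (hf : ContDiff ℝ ∞ f) (hg : ContDiff ℝ ∞ g) :
    JetEquiv r f g ↔ ∃ φ ψ, IsDiffeoGerm φ ∧ IsDiffeoGerm ψ ∧
      VanishesToOrder (r + 1) fun p => ψ (f (φ p)) - g p := by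
  have hjet : ∀ φ ψ : ℝ × ℝ → ℝ × ℝ, ContDiff ℝ ∞ φ → ContDiff ℝ ∞ ψ →
      ((∀ i ≤ r, iteratedFDeriv ℝ i (ψ ∘ f ∘ φ) 0 = iteratedFDeriv ℝ i g 0) ↔
        VanishesToOrder (r + 1) fun p => ψ (f (φ p)) - g p) := fun φ ψ hφ hψ => by
    have hcomp : ContDiff ℝ ∞ (ψ ∘ f ∘ φ) := hψ.comp (hf.comp hφ)
    refine .trans (forall_congr' fun i => ?_) (vanishesToOrder_iff_iteratedFDeriv
      (hcomp.sub hg)).symm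
    have hi : (i : WithTop ℕ∞) ≤ ∞ := WithTop.coe_le_coe.2 le_top
    rw [fun_iteratedFDeriv_sub_apply (hcomp.of_le hi).contDiffAt (hg.of_le hi).contDiffAt,
      sub_eq_zero, Nat.lt_succ_iff]
  constructor
  · rintro ⟨φ, ψ, hφ, hψ, hφ0, hψ0, hφ', hψ', h⟩
    exact ⟨φ, ψ, ⟨hφ, hφ0, hφ'⟩, ⟨hψ, hψ0, hψ'⟩, (hjet φ ψ hφ hψ).1 h⟩
  · rintro ⟨φ, ψ, hφ, hψ, h⟩
    exact ⟨φ, ψ, hφ.contDiff, hψ.contDiff, hφ.map_zero, hψ.map_zero, hφ.bijective, hψ.bijective,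
      (hjet φ ψ hφ.contDiff hψ.contDiff).2 h⟩

namespace JetEquiv

theorem refl (f : ℝ × ℝ → ℝ × ℝ) : JetEquiv r f f :=
  ⟨id, id, contDiff_id, contDiff_id, rfl, rfl, by simp [Function.bijective_id],
    by simp [Function.bijective_id], fun _ _ => rfl⟩

theorem trans (hf : ContDiff ℝ ∞ f) (hg : ContDiff ℝ ∞ g) (hh : ContDiff ℝ ∞ h) (hf0 : f 0 = 0)
    (hg0 : g 0 = 0) (hfg : JetEquiv r f g) (hgh : JetEquiv r g h) : JetEquiv r f h := by
  obtain ⟨φ, ψ, hφ, hψ, hjet⟩ := (jetEquiv_iff hf hg).1 hfg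
  obtain ⟨φ', ψ', hφ', hψ', hjet'⟩ := (jetEquiv_iff hg hh).1 hgh
  refine (jetEquiv_iff hf hh).2 ⟨_, _, hφ.comp hφ', hψ'.comp hψ, ?_⟩
  have hsrc : VanishesToOrder 1 fun p => ψ (f (φ (φ' p))) :=
    (hψ.vanishesToOrder.comp (.of_contDiff hf hf0)).comp (hφ.comp hφ').vanishesToOrder
  have htgt : VanishesToOrder 1 fun p => g (φ' p) :=
    (VanishesToOrder.of_contDiff hg hg0).comp hφ'.vanishesToOrder
  refine ((VanishesToOrder.comp_sub (hψ'.contDiff.of_le (by simp)).contDiffAt hsrc.tendsto_zero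
    htgt.tendsto_zero (hjet.comp hφ'.vanishesToOrder)).add hjet').congr fun p => ?_
  rw [sub_add_sub_cancel]

theorem fst_prodMk {k u v : ℝ × ℝ → ℝ} {q : ℝ → ℝ} (hu : ContDiff ℝ ∞ u) (hv : ContDiff ℝ ∞ v)
    (hk : ContDiff ℝ ∞ k) (hk0 : k 0 = 0) (hky : pdy k 0 ≠ 0) (hq : ContDiff ℝ ∞ q)
    (hq0 : q 0 = 0) (h : VanishesToOrder (r + 1) fun p => u (p.1, k p) - q p.1 - v p) :
    JetEquiv r (fun p => (p.1, u p)) fun p => (p.1, v p) := by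
  have hs : ContDiff ℝ ∞ fun p : ℝ × ℝ => p.2 - q p.1 := by fun_prop
  have hsy : pdy (fun p : ℝ × ℝ => p.2 - q p.1) 0 = 1 :=
    pdy_eq_of_hasDerivAt hs ((hasDerivAt_id' (0 : ℝ)).sub_const (q 0))
  refine (jetEquiv_iff (contDiff_fst.prodMk hu) (contDiff_fst.prodMk hv)).2
    ⟨_, _, .fst_prodMk hk hk0 hky, .fst_prodMk hs (by simp [hq0]) (by simp [hsy]), ?_⟩
  exact (VanishesToOrder.zero.prodMk h).congr fun p => by simp

end JetEquiv

theorem exists_eventuallyEq_fst_prodMk {N : ℕ} {F : ℝ × ℝ → ℝ × ℝ} {u : ℝ × ℝ → ℝ}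
    (hF : ContDiff ℝ ∞ F) (hu : ContDiff ℝ ∞ u)
    (h : VanishesToOrder (N + 2) fun p => F p - (p.1, u p)) :
    ∃ χ v, IsDiffeoGerm χ ∧ ContDiff ℝ ∞ v ∧ (VanishesToOrder (N + 2) fun p => v p - u p) ∧
      ∀ᶠ p in 𝓝 0, F (χ p) = (p.1, v p) := by
  have hsub : VanishesToOrder (N + 2) fun p => ((F p).1, p.2) - p :=
    (h.fst.prodMk .zero).congr fun p => by ext <;> simp
  obtain ⟨χ, hχ, hright, -⟩ := (IsDiffeoGerm.of_sub_id (hF.fst.prodMk contDiff_snd)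
    (hsub.mono (by omega))).exists_inverse
  refine ⟨χ, fun p => (F (χ p)).2, hχ, (hF.comp hχ.contDiff).snd, ?_, ?_⟩
  · have hχsub : VanishesToOrder (N + 2) fun p => χ p - p := by
      refine (hsub.comp hχ.vanishesToOrder).neg.congr' ?_
      filter_upwards [hright] with p hp
      rw [hp, neg_sub]
    have hid : Tendsto (fun p : ℝ × ℝ => p) (𝓝 0) (𝓝 0) := tendsto_id
    refine ((h.comp hχ.vanishesToOrder).snd.add (.comp_sub (hu.of_le (by simp)).contDiffAt
      hχ.vanishesToOrder.tendsto_zero hid hχsub)).congr fun p => ?_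
    simp
  · filter_upwards [hright] with p hp
    exact Prod.ext (Prod.ext_iff.1 hp).1 rfl

end JetEquiv

section Hadamard

variable {E F : Type w} [NormedAddCommGroup E] [NormedSpace ℝ E] [NormedAddCommGroup F]
  [NormedSpace ℝ F]

theorem hasFDerivAt_intervalIntegral_param [ProperSpace E] {G : ℝ × E → F}
    (hG : ContDiff ℝ 1 G) (a b : ℝ) (x : E) :
    HasFDerivAt (fun x => ∫ s in a..b, G (s, x))
      (∫ s in a..b, fderiv ℝ (fun y => G (s, y)) x) x := by
  have hderiv : ∀ s y, HasFDerivAt (fun y => G (s, y))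
      ((fderiv ℝ G (s, y)).comp (.inr ℝ ℝ E)) y := fun s y =>
    (hG.differentiable (by simp) (s, y)).hasFDerivAt.comp y (hasFDerivAt_prodMk_right s y)
  have hcont : Continuous fun q : ℝ × E => fderiv ℝ (fun y => G (q.1, y)) q.2 := by
    simp_rw [fun q : ℝ × E => (hderiv q.1 q.2).fderiv]
    exact (hG.continuous_fderiv (by simp)).clm_comp continuous_const
  obtain ⟨C, hC⟩ := ((isCompact_uIcc (a := a) (b := b)).prod
    (isCompact_closedBall x 1)).exists_bound_of_continuousOn hcont.continuousOn
  refine (intervalIntegral.hasFDerivAt_integral_of_dominated_of_fderiv_le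
    (F := fun y s => G (s, y)) (F' := fun y s => fderiv ℝ (fun y => G (s, y)) y)
    (bound := fun _ => C) (Metric.ball_mem_nhds x one_pos) (.of_forall fun y => ?_) ?_ ?_ ?_
    intervalIntegrable_const ?_)
  · exact (hG.continuous.comp (by fun_prop : Continuous fun s : ℝ => (s, y))).aestronglyMeasurable
  · exact (hG.continuous.comp
      (by fun_prop : Continuous fun s : ℝ => (s, x))).intervalIntegrable _ _
  · exact (hcont.comp (by fun_prop : Continuous fun s : ℝ => (s, x))).aestronglyMeasurable
  · exact .of_forall fun s hs y hy =>
      hC (s, y) ⟨uIoc_subset_uIcc hs, Metric.ball_subset_closedBall hy⟩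
  · exact .of_forall fun s _ y _ => (hderiv s y).differentiableAt.hasFDerivAt

theorem contDiff_intervalIntegral_param [ProperSpace E] {G : ℝ × E → F} (hG : ContDiff ℝ ∞ G)
    (a b : ℝ) : ContDiff ℝ ∞ fun x => ∫ s in a..b, G (s, x) := by
  rw [contDiff_infty]
  intro n
  induction n generalizing F with
  | zero =>
    refine contDiff_zero.2 ?_
    exact continuous_iff_continuousAt.2 fun x =>
      (hasFDerivAt_intervalIntegral_param (hG.of_le (by simp)) a b x).continuousAt
  | succ n ih =>
    have hG' : ContDiff ℝ ∞ fun q : ℝ × E => fderiv ℝ (fun y => G (q.1, y)) q.2 :=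
      ContDiff.fderiv (f := fun (q : ℝ × E) y => G (q.1, y)) (by fun_prop) contDiff_snd (by simp)
    exact contDiff_succ_iff_hasFDerivAt.2 ⟨_, ih hG', fun x =>
      hasFDerivAt_intervalIntegral_param (hG.of_le (by simp)) a b x⟩

theorem VanishesToOrder.intervalIntegral_segment {N : ℕ} {u : E → F} (hu : VanishesToOrder N u)
    (π : E →L[ℝ] E) :
    VanishesToOrder N fun p => ∫ s in (0 : ℝ)..1, u (π p + s • (p - π p)) := by
  obtain ⟨C, hC, hbound⟩ := IsBigO.exists_nonneg hu
  obtain ⟨ε, hε, hball⟩ := Metric.eventually_nhds_iff_ball.1 hbound.bound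
  set K := 2 * ‖π‖ + 1
  have hsegment : ∀ p, ∀ s ∈ Ioc (0 : ℝ) 1, ‖π p + s • (p - π p)‖ ≤ K * ‖p‖ := fun p s hs => by
    refine (norm_add_le_of_le (π.le_opNorm p) (norm_smul_le _ _)).trans ?_
    have hsub : ‖p - π p‖ ≤ ‖p‖ + ‖π‖ * ‖p‖ := norm_sub_le_of_le le_rfl (π.le_opNorm p)
    rw [Real.norm_of_nonneg hs.1.le]
    linarith [mul_le_of_le_one_left (norm_nonneg (p - π p)) hs.2]
  refine .of_bound (C * K ^ N) ?_
  have hKpos : 0 < K := by positivity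
  filter_upwards [Metric.ball_mem_nhds (0 : E) (div_pos hε hKpos)] with p hp
  rw [mem_ball_zero_iff, lt_div_iff₀' hKpos] at hp
  have hint := intervalIntegral.norm_integral_le_of_norm_le_const (a := 0) (b := 1)
    (f := fun s : ℝ => u (π p + s • (p - π p))) (C := C * (K * ‖p‖) ^ N) fun s hs => by
      rw [uIoc_of_le zero_le_one] at hs
      have hle := hsegment p s hs
      refine (hball _ (mem_ball_zero_iff.2 (hle.trans_lt hp))).trans ?_
      rw [norm_pow, norm_norm]
      gcongr
  simpa [mul_pow, mul_assoc] using hint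

theorem exists_hadamard_quotient [ProperSpace E] [CompleteSpace F] {u : E → F}
    (hu : ContDiff ℝ ∞ u) (π : E →L[ℝ] E) (ℓ : E → ℝ) (w : E) (hπ : ∀ p, p - π p = ℓ p • w) :
    ∃ v : E → F, ContDiff ℝ ∞ v ∧ (∀ p, u p = u (π p) + ℓ p • v p) ∧
      ∀ N, VanishesToOrder N (fun p => fderiv ℝ u p w) → VanishesToOrder N v := by
  have hw : ContDiff ℝ ∞ fun p => fderiv ℝ u p w :=
    (hu.fderiv_right (by simp)).clm_apply contDiff_const
  refine ⟨fun p => ∫ s in (0 : ℝ)..1, fderiv ℝ u (π p + s • (p - π p)) w,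
    contDiff_intervalIntegral_param (G := fun q : ℝ × E =>
      fderiv ℝ u (π q.2 + q.1 • (q.2 - π q.2)) w) (hw.comp (by fun_prop)) 0 1, fun p => ?_,
    fun N hN => hN.intervalIntegral_segment π⟩
  have hderiv : ∀ s : ℝ, HasDerivAt (fun s => u (π p + s • (p - π p)))
      (ℓ p • fderiv ℝ u (π p + s • (p - π p)) w) s := fun s => by
    have hline : HasDerivAt (fun s : ℝ => π p + s • (p - π p)) (p - π p) s := by
      simpa using ((hasDerivAt_id s).smul_const (p - π p)).const_add (π p)
    have hcomp := (hu.differentiable (by simp) _).hasFDerivAt.comp_hasDerivAt s hline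
    rwa [hπ p, map_smul, ← hπ p] at hcomp
  have hcont : Continuous fun s : ℝ => ℓ p • fderiv ℝ u (π p + s • (p - π p)) w :=
    (hw.continuous.comp (by fun_prop)).const_smul _
  have hftc := intervalIntegral.integral_eq_sub_of_hasDerivAt (fun s _ => hderiv s)
    (hcont.intervalIntegrable 0 1)
  rw [intervalIntegral.integral_smul] at hftc
  rw [hftc]
  simp

end Hadamard

section NormalForm

variable {r N : ℕ} {α β c : ℝ} {e g u : ℝ × ℝ → ℝ}

theorem exists_eq_axis_add_snd_mul (hu : ContDiff ℝ ∞ u) :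
    ∃ v, ContDiff ℝ ∞ v ∧ (∀ p, u p = u (p.1, 0) + p.2 * v p) ∧
      ∀ N, VanishesToOrder N (pdy u) → VanishesToOrder N v :=
  exists_hadamard_quotient hu (.comp (.inl ℝ ℝ ℝ) (.fst ℝ ℝ ℝ)) Prod.snd (0, 1) fun p => by
    ext <;> simp

theorem exists_eq_axis_add_fst_mul (hu : ContDiff ℝ ∞ u) :
    ∃ v, ContDiff ℝ ∞ v ∧ (∀ p, u p = u (0, p.2) + p.1 * v p) ∧
      ∀ N, VanishesToOrder N (pdx u) → VanishesToOrder N v :=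
  exists_hadamard_quotient hu (.comp (.inr ℝ ℝ ℝ) (.snd ℝ ℝ ℝ)) Prod.fst (1, 0) fun p => by
    ext <;> simp

/-- The second components occurring in the reduction to normal form: `c y ^ r + α x y ^ 2` up to
an error `x e(x, y)`. The reduction raises the order to which `e` vanishes. -/
def normalForm (r : ℕ) (α c : ℝ) (e : ℝ × ℝ → ℝ) (p : ℝ × ℝ) : ℝ :=
  c * p.2 ^ r + p.1 * (α * p.2 ^ 2 + e p)

theorem contDiff_normalForm (he : ContDiff ℝ ∞ e) : ContDiff ℝ ∞ (normalForm r α c e) := by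
  unfold normalForm
  fun_prop

theorem contDiff_prodMk_normalForm (he : ContDiff ℝ ∞ e) :
    ContDiff ℝ ∞ fun p => (p.1, normalForm r α c e p) :=
  contDiff_fst.prodMk (contDiff_normalForm he)

theorem prodMk_normalForm_zero (hr : r ≠ 0) : ((0 : ℝ × ℝ).1, normalForm r α c e 0) = 0 := by
  simp [normalForm, hr]

theorem exists_jetEquiv_normalForm_of_taylor (hg : ContDiff ℝ ∞ g) (hg0 : g 0 = 0)
    (haxis : VanishesToOrder (r + 1) fun t => g (0, t) - c * t ^ r)
    (hgy : VanishesToOrder 3 fun p => pdy g p - 2 * α * (p.1 * p.2)) :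
    ∃ e, ContDiff ℝ ∞ e ∧ VanishesToOrder 3 e ∧
      JetEquiv r (fun p => (p.1, g p)) fun p => (p.1, normalForm r α c e p) := by
  let u : ℝ × ℝ → ℝ := fun p => g p - α * (p.1 * p.2 ^ 2)
  have hu : ContDiff ℝ ∞ u := by fun_prop
  have huy : ∀ p, pdy u p = pdy g p - 2 * α * (p.1 * p.2) := fun p =>
    pdy_eq_of_hasDerivAt hu <| by
      refine ((hasDerivAt_pdy hg p.1 p.2).sub
        (((hasDerivAt_pow 2 p.2).const_mul p.1).const_mul α)).congr_deriv ?_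
      push_cast
      ring
  obtain ⟨v, hv, huv, hvord⟩ := exists_eq_axis_add_snd_mul hu
  have hv3 : VanishesToOrder 3 v := hvord 3 (hgy.congr huy)
  obtain ⟨z, hz, hvz, hzord⟩ := exists_eq_axis_add_fst_mul hv
  have hz2 : VanishesToOrder 2 z := hzord 2 ((vanishesToOrder_succ_iff hv).1 hv3).2.1
  refine ⟨fun p => p.2 * z p, by fun_prop,
    (vanishesToOrder_snd.mul hz2).mono (by norm_num), ?_⟩
  refine .fst_prodMk hg (contDiff_normalForm (by fun_prop)) contDiff_snd rfl ?_
    (q := fun x => g (x, 0)) (by fun_prop) hg0 ((haxis.comp vanishesToOrder_snd).congr fun p => ?_)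
  · rw [pdy_eq_of_hasDerivAt contDiff_snd (hasDerivAt_id' (0 : ℝ))]
    exact one_ne_zero
  have hy := huv (0, p.2)
  have hxy := huv p
  have hg0' : g (0, 0) = 0 := hg0
  simp only [u, hvz p, hg0'] at hy hxy
  simp only [normalForm]
  linear_combination hxy - hy

theorem exists_jetEquiv_normalForm (hg : ContDiff ℝ ∞ g) (hg0 : g 0 = 0) (hα : α ≠ 0)
    (haxis : VanishesToOrder (r + 1) fun t => g (0, t) - c * t ^ r)
    (hgy : VanishesToOrder 3 fun p => pdy g p - (2 * α * (p.1 * p.2) + β * p.1 ^ 2)) :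
    ∃ e, ContDiff ℝ ∞ e ∧ VanishesToOrder 3 e ∧
      JetEquiv r (fun p => (p.1, g p)) fun p => (p.1, normalForm r α c e p) := by
  obtain ⟨κ, hκ⟩ : ∃ κ, 2 * α * κ + β = 0 := ⟨-β / (2 * α), by field_simp; ring⟩
  have hk : ContDiff ℝ ∞ fun p : ℝ × ℝ => p.2 + κ * p.1 := by fun_prop
  have hky : ∀ x y, HasDerivAt (fun s => s + κ * x) 1 y := fun x y =>
    (hasDerivAt_id' y).add_const (κ * x)
  have hshear : ContDiff ℝ ∞ fun p : ℝ × ℝ => (p.1, p.2 + κ * p.1) := contDiff_fst.prodMk hk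
  have hg' : ContDiff ℝ ∞ fun p : ℝ × ℝ => g (p.1, p.2 + κ * p.1) := hg.comp hshear
  have hg'y : ∀ p, pdy (fun p : ℝ × ℝ => g (p.1, p.2 + κ * p.1)) p =
      pdy g (p.1, p.2 + κ * p.1) := fun p =>
    pdy_eq_of_hasDerivAt hg' ((hasDerivAt_pdy hg p.1 _).comp_add_const p.2 (κ * p.1))
  have hg'0 : g ((0 : ℝ × ℝ).1, (0 : ℝ × ℝ).2 + κ * (0 : ℝ × ℝ).1) = 0 := by
    rw [Prod.fst_zero, Prod.snd_zero, mul_zero, add_zero]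
    exact hg0
  have hg'y3 : VanishesToOrder 3 fun p =>
      pdy (fun p : ℝ × ℝ => g (p.1, p.2 + κ * p.1)) p - 2 * α * (p.1 * p.2) :=
    (hgy.comp (.of_contDiff hshear (by simp))).congr fun p => by
      rw [hg'y]
      linear_combination p.1 ^ 2 * hκ
  obtain ⟨e, he, he3, hequiv⟩ := exists_jetEquiv_normalForm_of_taylor hg' hg'0
    (by simpa using haxis) hg'y3
  refine ⟨e, he, he3, .trans (contDiff_fst.prodMk hg) (contDiff_fst.prodMk hg')
    (contDiff_prodMk_normalForm he) (by simp [hg0]) (by rw [hg'0]; rfl) ?_ hequiv⟩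
  refine .fst_prodMk hg hg' hk (by simp) ?_ (q := fun _ => 0) contDiff_const rfl
    (VanishesToOrder.zero.congr fun p => by simp)
  rw [pdy_eq_of_hasDerivAt hk (hky 0 0)]
  exact one_ne_zero

-- Replacing `y` by `y + w` with `2 α w = -e₁`, where `e(x, y) = e(x, 0) + y e₁(x, y)`, cancels the
-- term `x y e₁`; the term `x e(x, 0)` is removed by a coordinate change in the target.
theorem exists_jetEquiv_normalForm_succ (hr : 4 ≤ r) (hN : 3 ≤ N) (hα : α ≠ 0)
    (he : ContDiff ℝ ∞ e) (heN : VanishesToOrder N e) :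
    ∃ e', ContDiff ℝ ∞ e' ∧ VanishesToOrder (N + 1) e' ∧
      JetEquiv r (fun p => (p.1, normalForm r α c e p))
        fun p => (p.1, normalForm r α c e' p) := by
  obtain ⟨M, rfl⟩ : ∃ M, N = M + 1 := ⟨N - 1, by omega⟩
  obtain ⟨e₁, he₁, hee₁, he₁ord⟩ := exists_eq_axis_add_snd_mul he
  have he₁M : VanishesToOrder M e₁ := he₁ord M ((vanishesToOrder_succ_iff he).1 heN).2.2
  let w : ℝ × ℝ → ℝ := fun p => -(2 * α)⁻¹ * e₁ p
  have hw : ContDiff ℝ ∞ w := contDiff_const.mul he₁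
  have hwM : VanishesToOrder M w := he₁M.const_mul _
  have hwy : pdy w 0 = 0 :=
    ((vanishesToOrder_succ_iff hw).1 (hwM.mono (by omega : 1 + 1 ≤ M))).2.2.eq_zero
  have hk : ContDiff ℝ ∞ fun p : ℝ × ℝ => p.2 + w p := contDiff_snd.add hw
  have hk1 : VanishesToOrder 1 fun p : ℝ × ℝ => p.2 + w p :=
    vanishesToOrder_snd.add (hwM.mono (by omega))
  have hky : pdy (fun p : ℝ × ℝ => p.2 + w p) 0 = 1 + pdy w 0 :=
    pdy_eq_of_hasDerivAt hk ((hasDerivAt_id' (0 : ℝ)).add (hasDerivAt_pdy hw 0 0))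
  let d : ℝ × ℝ → ℝ := fun p => e (p.1, p.2 + w p) - e (p.1, p.2)
  have hd : VanishesToOrder (M + 1 + 1) d := by
    refine (VanishesToOrder.comp_sub_of_fderiv (.of_forall (he.differentiable (by simp)))
      (heN.fderiv he) (vanishesToOrder_fst.prodMk hk1)
      (vanishesToOrder_fst.prodMk vanishesToOrder_snd) ?_ (M := M)).mono (by omega)
    exact (VanishesToOrder.zero.prodMk hwM).congr fun p => Prod.ext (by simp) (by simp)
  have hpow : VanishesToOrder (r + 1) fun p => c * ((p.2 + w p) ^ r - p.2 ^ r) :=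
    ((hk1.pow_sub_pow vanishesToOrder_snd (hwM.congr fun p => by ring) r).const_mul c).mono
      (by omega)
  refine ⟨fun p => α * w p ^ 2 + d p, by fun_prop,
    ((((hwM.mul hwM).const_mul α).mono (by omega)).add hd).congr fun p => by ring,
    .fst_prodMk (contDiff_normalForm he) (contDiff_normalForm (by fun_prop)) hk hk1.eq_zero
      (by simp [hky, hwy]) (q := fun x => x * e (x, 0)) (by fun_prop) (by simp)
      (hpow.congr fun p => ?_)⟩
  have hcancel : 2 * α * w p = -e₁ p := by simp only [w]; field_simp
  simp only [normalForm, d]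
  linear_combination p.1 * p.2 * hcancel + p.1 * hee₁ p

theorem exists_jetEquiv_normalForm_vanishesToOrder (hr : 4 ≤ r) (hN : 3 ≤ N) (hα : α ≠ 0)
    (he : ContDiff ℝ ∞ e) (he3 : VanishesToOrder 3 e) :
    ∃ e', ContDiff ℝ ∞ e' ∧ VanishesToOrder N e' ∧
      JetEquiv r (fun p => (p.1, normalForm r α c e p))
        fun p => (p.1, normalForm r α c e' p) := by
  induction N, hN using Nat.le_induction with
  | base => exact ⟨e, he, he3, .refl _⟩
  | succ N hN ih =>
    obtain ⟨e₁, he₁, he₁N, hequiv₁⟩ := ih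
    obtain ⟨e₂, he₂, he₂N, hequiv₂⟩ := exists_jetEquiv_normalForm_succ hr hN hα he₁ he₁N (c := c)
    exact ⟨e₂, he₂, he₂N, .trans (contDiff_prodMk_normalForm he) (contDiff_prodMk_normalForm he₁)
      (contDiff_prodMk_normalForm he₂) (prodMk_normalForm_zero (by omega))
      (prodMk_normalForm_zero (by omega)) hequiv₁ hequiv₂⟩

theorem normalForm_jetEquiv_model (hα : α ≠ 0) (hc : c ≠ 0) (he : ContDiff ℝ ∞ e)
    (her : VanishesToOrder r e) :
    JetEquiv r (fun p => (p.1, normalForm r α c e p))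
      fun p => (p.1, p.1 * p.2 ^ 2 + p.2 ^ r) := by
  refine (jetEquiv_iff (contDiff_prodMk_normalForm he) (by fun_prop)).2
    ⟨_, _, .const_mul_prodMk (div_ne_zero hc hα) one_ne_zero,
      .const_mul_prodMk (div_ne_zero hα hc) (inv_ne_zero hc), ?_⟩
  have herr : VanishesToOrder (r + 1) fun p : ℝ × ℝ =>
      α⁻¹ * (e (c / α * p.1, 1 * p.2) * p.1) :=
    ((her.comp ((vanishesToOrder_fst.const_mul _).prodMk (vanishesToOrder_snd.const_mul _))).mul
      vanishesToOrder_fst).const_mul _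
  refine (VanishesToOrder.zero.prodMk herr).congr fun p => ?_
  ext
  · change α / c * (c / α * p.1) - p.1 = 0
    field_simp
    ring
  · change c⁻¹ * normalForm r α c e (c / α * p.1, 1 * p.2) - (p.1 * p.2 ^ 2 + p.2 ^ r) = _
    simp only [normalForm]
    field_simp
    ring

theorem fst_prodMk_jetEquiv_model (hr : 4 ≤ r) (hg : ContDiff ℝ ∞ g)
    (hlow : ∀ i < r, pdy^[i] g 0 = 0) (htop : pdy^[r] g 0 ≠ 0)
    (hgy : VanishesToOrder 2 (pdy g)) (hxyy : pdx (pdy (pdy g)) 0 ≠ 0) :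
    JetEquiv r (fun p => (p.1, g p)) fun p => (p.1, p.1 * p.2 ^ 2 + p.2 ^ r) := by
  have hg0 : g 0 = 0 := hlow 0 (by omega)
  let c := (r.factorial : ℝ)⁻¹ * pdy^[r] g 0
  have hc : c ≠ 0 := mul_ne_zero (inv_ne_zero (Nat.cast_ne_zero.2 r.factorial_ne_zero)) htop
  let α := pdx (pdy (pdy g)) 0 / 2
  have hα : α ≠ 0 := div_ne_zero hxyy two_ne_zero
  have haxis : VanishesToOrder (r + 1) fun t => g (0, t) - c * t ^ r :=
    ((isDerivChain_iterate_pdy hg).taylor hlow).congr fun t => by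
      simp only [Function.iterate_zero, id_eq, c, smul_eq_mul, mul_comm (t ^ r)]
      rfl
  have hyyy : pdy (pdy (pdy g)) 0 = 0 := hlow 3 (by omega)
  have hquad : VanishesToOrder 3 fun p =>
      pdy g p - (2 * α * (p.1 * p.2) + pdx (pdx (pdy g)) 0 / 2 * p.1 ^ 2) :=
    (vanishesToOrder_sub_hessForm (contDiff_pdy hg) hgy).congr fun p => by
      simp only [hessForm, hyyy, α]
      ring
  obtain ⟨e₁, he₁, he₁3, hequiv₁⟩ := exists_jetEquiv_normalForm hg hg0 hα haxis hquad
  obtain ⟨e₂, he₂, he₂r, hequiv₂⟩ :=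
    exists_jetEquiv_normalForm_vanishesToOrder (N := r) (c := c) hr (by omega) hα he₁ he₁3
  exact .trans (contDiff_fst.prodMk hg) (contDiff_prodMk_normalForm he₁) (by fun_prop)
    (by simp [hg0]) (prodMk_normalForm_zero (by omega)) hequiv₁ <|
    .trans (contDiff_prodMk_normalForm he₁) (contDiff_prodMk_normalForm he₂) (by fun_prop)
      (prodMk_normalForm_zero (by omega)) (prodMk_normalForm_zero (by omega)) hequiv₂
      (normalForm_jetEquiv_model hα hc he₂ he₂r)

end NormalForm

section PrenormalForm

/-- In the coordinate changes `φ` of the source and `ψ` of the target, the germ of `f` at `0` is the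
prenormal form `(x, y) ↦ (x, g (x, y))` of a corank one germ. -/
structure IsPrenormalForm (f φ ψ : ℝ × ℝ → ℝ × ℝ) (g : ℝ × ℝ → ℝ) : Prop where
  source : IsDiffeoGerm φ
  target : IsDiffeoGerm ψ
  contDiff : ContDiff ℝ ∞ g
  eventually_eq : ∀ᶠ p in 𝓝 0, ψ (f (φ p)) = (p.1, g p)

variable {f : ℝ × ℝ → ℝ × ℝ}

theorem IsPrenormalForm.jetEquiv {φ ψ : ℝ × ℝ → ℝ × ℝ} {g : ℝ × ℝ → ℝ} {r : ℕ}
    (h : IsPrenormalForm f φ ψ g) (hf : ContDiff ℝ ∞ f) :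
    JetEquiv r f fun p => (p.1, g p) :=
  (jetEquiv_iff hf (contDiff_fst.prodMk h.contDiff)).2 ⟨φ, ψ, h.source, h.target,
    .congr' .zero (h.eventually_eq.mono fun _ hp => sub_eq_zero.2 hp)⟩

theorem JetEquiv.exists_isPrenormalForm {u : ℝ × ℝ → ℝ} {N : ℕ} (hf : ContDiff ℝ ∞ f)
    (hu : ContDiff ℝ ∞ u) (h : JetEquiv (N + 1) f fun p => (p.1, u p)) :
    ∃ φ ψ g, IsPrenormalForm f φ ψ g ∧ VanishesToOrder (N + 2) fun p => g p - u p := by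
  obtain ⟨φ, ψ, hφ, hψ, hjet⟩ := (jetEquiv_iff hf (contDiff_fst.prodMk hu)).1 h
  obtain ⟨χ, g, hχ, hg, hgu, heq⟩ :=
    exists_eventuallyEq_fst_prodMk (hψ.contDiff.comp (hf.comp hφ.contDiff)) hu hjet
  exact ⟨_, ψ, g, ⟨hφ.comp hχ, hψ, hg, heq⟩, hgu⟩

namespace CorankOne

theorem fderiv_ne_zero (hf : CorankOne f) : fderiv ℝ f 0 ≠ 0 := fun h => by
  rw [CorankOne, h, ContinuousLinearMap.toLinearMap_zero, LinearMap.rank_zero] at hf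
  exact zero_ne_one hf

theorem jacDet_eq_zero (hf : CorankOne f) : jacDet f 0 = 0 := by
  by_contra h
  have hsurj := (jacDet_ne_zero_iff_bijective.1 h).2
  rw [CorankOne, LinearMap.rank, LinearMap.range_eq_top.2 hsurj, rank_top] at hf
  have hdim : Module.finrank ℝ (ℝ × ℝ) = 1 := Module.finrank_eq_of_rank_eq (mod_cast hf)
  simp at hdim

theorem exists_linear_normalForm (hf : CorankOne f) :
    ∃ A P : (ℝ × ℝ) ≃L[ℝ] ℝ × ℝ, ∀ p, P (fderiv ℝ f 0 (A p)) = (p.1, 0) := by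
  have hker : ∃ v ≠ 0, fderiv ℝ f 0 v = 0 := by
    by_contra! hinj
    have hinj' : LinearMap.ker (fderiv ℝ f 0 : ℝ × ℝ →ₗ[ℝ] ℝ × ℝ) = ⊥ :=
      LinearMap.ker_eq_bot'.2 fun v hv => by_contra fun hv0 => hinj v hv0 hv
    exact jacDet_ne_zero_iff_bijective.2 ⟨LinearMap.ker_eq_bot.1 hinj',
      LinearMap.injective_iff_surjective.1 (LinearMap.ker_eq_bot.1 hinj')⟩ hf.jacDet_eq_zero
  obtain ⟨v, hv0, hv⟩ := hker
  obtain ⟨A, hA⟩ := SeparatingDual.exists_continuousLinearEquiv_apply_eq (R := ℝ)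
    (x := ((0, 1) : ℝ × ℝ)) (by simp) hv0
  have hsplit : ∀ p, fderiv ℝ f 0 (A p) = p.1 • fderiv ℝ f 0 (A (1, 0)) := fun p => by
    have hp : p = p.1 • ((1, 0) : ℝ × ℝ) + p.2 • ((0, 1) : ℝ × ℝ) := by ext <;> simp
    conv_lhs => rw [hp, map_add, map_add, map_smul, map_smul, map_smul, map_smul, hA, hv, smul_zero,
      add_zero]
  have hw : fderiv ℝ f 0 (A (1, 0)) ≠ 0 := fun hw => hf.fderiv_ne_zero <| by
    refine ContinuousLinearMap.ext fun q => ?_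
    rw [← A.apply_symm_apply q, hsplit, hw, smul_zero, zero_apply]
  obtain ⟨P, hP⟩ := SeparatingDual.exists_continuousLinearEquiv_apply_eq (R := ℝ) hw
    (y := ((1, 0) : ℝ × ℝ)) (by simp)
  exact ⟨A, P, fun p => by rw [hsplit, map_smul, hP]; simp⟩

theorem exists_isPrenormalForm (hf : CorankOne f) (hsmooth : ContDiff ℝ ∞ f) (hf0 : f 0 = 0) :
    ∃ φ ψ g, IsPrenormalForm f φ ψ g := by
  obtain ⟨A, P, hAP⟩ := hf.exists_linear_normalForm
  have hlin := (VanishesToOrder.sub_fderiv hsmooth hf0).comp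
    (IsDiffeoGerm.of_continuousLinearEquiv A).vanishesToOrder
  have hquad : VanishesToOrder 2 fun p => P (f (A p)) - (p.1, 0) := by
    refine VanishesToOrder.congr (((P : ℝ × ℝ →L[ℝ] ℝ × ℝ).isBigO_comp _ _).trans hlin) fun p => ?_
    rw [← hAP, ← map_sub]
    rfl
  obtain ⟨χ, g, hχ, hg, -, heq⟩ := exists_eventuallyEq_fst_prodMk (N := 0)
    (P.contDiff.comp (hsmooth.comp A.contDiff)) contDiff_const hquad
  exact ⟨_, P, g, (IsDiffeoGerm.of_continuousLinearEquiv A).comp hχ,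
    .of_continuousLinearEquiv P, hg, heq⟩

end CorankOne

end PrenormalForm

section NullVectorField

variable {η : ℝ × ℝ → ℝ × ℝ} {u : ℝ × ℝ → ℝ}

theorem contDiffAt_etaIter {p : ℝ × ℝ} (hη : ∀ᶠ q in 𝓝 p, ContDiffAt ℝ ∞ η q)
    (hu : ContDiff ℝ ∞ u) (k : ℕ) : ∀ᶠ q in 𝓝 p, ContDiffAt ℝ ∞ (etaIter η k u) q := by
  induction k with
  | zero => exact .of_forall fun q => hu.contDiffAt
  | succ k ih =>
    filter_upwards [hη, ih] with q hηq hq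
    exact (hq.fderiv_right (m := ∞) (by simp)).clm_apply hηq

theorem IsNullVF.eventually_contDiffAt {f : ℝ × ℝ → ℝ × ℝ} (h : IsNullVF f η) :
    ∀ᶠ p in 𝓝 0, ContDiffAt ℝ ∞ η p := by
  obtain ⟨-, U, hU, hη, -⟩ := h
  filter_upwards [eventually_mem_nhds_iff.2 hU] with p hp
  exact hη.contDiffAt hp

theorem IsNullVF.eventually_fderiv_eq_zero {f : ℝ × ℝ → ℝ × ℝ} (h : IsNullVF f η) :
    ∀ᶠ p in 𝓝 0, jacDet f p = 0 → fderiv ℝ f p (η p) = 0 :=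
  let ⟨_, _, hU, _, hnull⟩ := h
  mem_of_superset hU hnull

theorem exists_integralCurve (hη : ContDiffAt ℝ 1 η 0) :
    ∃ γ : ℝ → ℝ × ℝ, γ 0 = 0 ∧ ∀ᶠ t in 𝓝 0, HasDerivAt γ (η (γ t)) t := by
  obtain ⟨γ, h0, ε, hε, hγ⟩ :=
    hη.exists_forall_mem_closedBall_exists_eq_forall_mem_Ioo_hasDerivAt₀ (0 : ℝ)
  exact ⟨γ, h0, mem_of_superset (Ioo_mem_nhds (by linarith) (by linarith)) hγ⟩

theorem isDerivChain_etaIter {γ : ℝ → ℝ × ℝ} (hη : ∀ᶠ p in 𝓝 0, ContDiffAt ℝ ∞ η p)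
    (hu : ContDiff ℝ ∞ u) (hγ0 : γ 0 = 0) (hγ : ∀ᶠ t in 𝓝 0, HasDerivAt γ (η (γ t)) t) :
    IsDerivChain fun i t => etaIter η i u (γ t) := fun i => by
  have hcont : Tendsto γ (𝓝 0) (𝓝 0) := by
    simpa only [hγ0] using hγ.self_of_nhds.continuousAt.tendsto
  filter_upwards [hγ, hcont.eventually (contDiffAt_etaIter hη hu i)] with t ht hi
  exact (hi.differentiableAt (by simp)).hasFDerivAt.comp_hasDerivAt t ht

end NullVectorField

section Hessian

variable {u v w : ℝ × ℝ → ℝ}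

theorem det_hess (hu : ContDiff ℝ ∞ u) :
    (hess u).det = pdx (pdx u) 0 * pdy (pdy u) 0 - pdx (pdy u) 0 ^ 2 := by
  rw [hess, Matrix.det_fin_two_of, pdx_pdy_comm hu, sq]

theorem det_hess_eq_of_vanishesToOrder_sub (hu : ContDiff ℝ ∞ u) (h : VanishesToOrder 2 u)
    {a b c : ℝ}
    (h3 : VanishesToOrder 3 fun p => u p - (a * p.1 ^ 2 + b * (p.1 * p.2) + c * p.2 ^ 2)) :
    (hess u).det = 4 * a * c - b ^ 2 := by
  obtain ⟨hxx, hxy, hyy⟩ := hessForm_coeff_eq hu h h3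
  rw [det_hess hu, ← hxx, ← hxy, ← hyy]
  ring

theorem det_hess_congr (hu : ContDiff ℝ ∞ u) (hv : ContDiff ℝ ∞ v) (h : VanishesToOrder 2 u)
    (huv : VanishesToOrder 3 fun p => u p - v p) : (hess u).det = (hess v).det := by
  have hv2 : VanishesToOrder 2 v := (h.sub (huv.mono (by simp))).congr fun p => by ring
  have hform : VanishesToOrder 3 fun p => u p - hessForm v p :=
    (huv.add (vanishesToOrder_sub_hessForm hv hv2)).congr fun p => by ring
  rw [det_hess_eq_of_vanishesToOrder_sub hu h hform, det_hess hv]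
  ring

theorem vanishesToOrder_mul_comp_sub_hessForm {φ : ℝ × ℝ → ℝ × ℝ} (hu : ContDiff ℝ ∞ u)
    (h : VanishesToOrder 2 u) (hw : ContDiff ℝ ∞ w) (hφ : ContDiff ℝ ∞ φ) (hφ0 : φ 0 = 0) :
    VanishesToOrder 3 fun p => w p * u (φ p) - w 0 * hessForm u (fderiv ℝ φ 0 p) := by
  have hlin : VanishesToOrder 1 (fderiv ℝ φ 0) :=
    .of_contDiff (fderiv ℝ φ 0).contDiff (map_zero _)
  have hcomp : VanishesToOrder 3 fun p => u (φ p) - u (fderiv ℝ φ 0 p) :=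
    .comp_sub_of_fderiv (k := 1) (.of_forall (hu.differentiable (by simp))) (h.fderiv hu)
      (.of_contDiff hφ hφ0) hlin (.sub_fderiv hφ hφ0)
  have hweight : VanishesToOrder 3 fun p => (w p - w 0) * u (fderiv ℝ φ 0 p) :=
    (VanishesToOrder.of_contDiff (hw.sub contDiff_const) (sub_self _)).mul (h.comp hlin)
  have hform := ((vanishesToOrder_sub_hessForm hu h).comp hlin).const_mul (w 0)
  refine (((hcomp.mul_left hw.continuous.continuousAt).add hweight).add hform).congr fun p => ?_
  ring

theorem det_hess_mul_comp {φ : ℝ × ℝ → ℝ × ℝ} (hu : ContDiff ℝ ∞ u) (h : VanishesToOrder 2 u)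
    (hw : ContDiff ℝ ∞ w) (hφ : ContDiff ℝ ∞ φ) (hφ0 : φ 0 = 0) :
    (hess fun p => w p * u (φ p)).det = (w 0 * jacDet φ 0) ^ 2 * (hess u).det := by
  let A := pdx (pdx u) 0 / 2
  let B := pdx (pdy u) 0
  let C := pdy (pdy u) 0 / 2
  let e := fderiv ℝ φ 0 (1, 0)
  let d := fderiv ℝ φ 0 (0, 1)
  have hlin : ∀ p : ℝ × ℝ, fderiv ℝ φ 0 p = p.1 • e + p.2 • d := fun p => by
    rw [← map_smul, ← map_smul, ← map_add]
    congr 1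
    ext <;> simp
  have hvanish : VanishesToOrder 2 fun p => w p * u (φ p) :=
    (h.comp (.of_contDiff hφ hφ0)).mul_left hw.continuous.continuousAt
  have hform : VanishesToOrder 3 fun p => w p * u (φ p) -
      (w 0 * (A * e.1 ^ 2 + B * (e.1 * e.2) + C * e.2 ^ 2) * p.1 ^ 2 +
        w 0 * (2 * A * e.1 * d.1 + B * (e.1 * d.2 + d.1 * e.2) + 2 * C * e.2 * d.2) *
          (p.1 * p.2) +
        w 0 * (A * d.1 ^ 2 + B * (d.1 * d.2) + C * d.2 ^ 2) * p.2 ^ 2) := by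
    refine (vanishesToOrder_mul_comp_sub_hessForm hu h hw hφ hφ0).congr fun p => ?_
    simp only [hlin, hessForm, A, B, C, Prod.fst_add, Prod.snd_add, Prod.smul_fst, Prod.smul_snd,
      smul_eq_mul]
    ring
  refine (det_hess_eq_of_vanishesToOrder_sub (hw.mul (hu.comp hφ)) hvanish hform).trans ?_
  rw [det_hess hu, jacDet]
  simp only [A, B, C, e, d]
  ring

end Hessian

section ZeroSet

variable {k Λ H : ℝ × ℝ → ℝ}

theorem tendsto_fst_zero : Tendsto (Prod.fst : ℝ × ℝ → ℝ) (𝓝 0) (𝓝 0) :=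
  continuous_fst.tendsto' _ _ rfl

theorem exists_zero_branch (hk : ContDiff ℝ ∞ k) (hk0 : k 0 = 0) (hky : pdy k 0 ≠ 0) :
    ∃ σ : ℝ → ℝ, Tendsto σ (𝓝 0) (𝓝 0) ∧ (∀ᶠ s in 𝓝 0, k (s, σ s) = 0) ∧
      (fun p : ℝ × ℝ => p.2 - σ p.1) =O[𝓝 0] k := by
  have hθ := IsDiffeoGerm.fst_prodMk hk hk0 hky
  obtain ⟨χ, hχ, hright, hleft⟩ := hθ.exists_inverse
  have haxis : Tendsto (fun s : ℝ => (s, (0 : ℝ))) (𝓝 0) (𝓝 0) :=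
    (continuous_id.prodMk continuous_const).tendsto' _ _ rfl
  refine ⟨fun s => (χ (s, 0)).2,
    (hχ.vanishesToOrder.snd.tendsto_zero (N := 0)).comp haxis, ?_, ?_⟩
  · filter_upwards [haxis.eventually hright] with s hs
    obtain ⟨hfst, hsnd⟩ := Prod.ext_iff.1 hs
    dsimp only at hfst hsnd
    rwa [← Prod.mk.eta (p := χ (s, 0)), hfst] at hsnd
  · have hχ1 : ContDiffAt ℝ 1 χ 0 := (hχ.contDiff.of_le (by simp)).contDiffAt
    obtain ⟨K, t, ht, hK⟩ := hχ1.exists_lipschitzOnWith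
    refine .of_bound K ?_
    filter_upwards [hleft, hθ.vanishesToOrder.tendsto_zero (N := 0) ht,
      (haxis.comp tendsto_fst_zero) ht]
      with p hp hθp hp'
    have hlip := hK.norm_sub_le hθp hp'
    rw [hp] at hlip
    refine (norm_snd_le (p - χ (p.1, 0))).trans (hlip.trans_eq ?_)
    simp

theorem eq_zero_of_vanishesToOrder_pow_mul {u : ℝ → ℝ} {i : ℕ} (hu : ContDiff ℝ ∞ u)
    (h : VanishesToOrder (i + 1) fun t => t ^ i * u t) : u 0 = 0 := by
  have hdiff : VanishesToOrder (i + 1) fun t => t ^ i * (u t - u 0) :=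
    (vanishesToOrder_id.pow i).mul (.of_contDiff (hu.sub contDiff_const) (sub_self _))
  refine eq_zero_of_vanishesToOrder_pow_smul (isBigO_refl _ _)
    ((h.sub hdiff).congr fun t => ?_)
  rw [smul_eq_mul]
  ring

theorem exists_blowup_eq (hΛ : ContDiff ℝ ∞ Λ) (h : VanishesToOrder 2 Λ) :
    ∃ k, ContDiff ℝ ∞ k ∧ (∀ p : ℝ × ℝ, Λ (p.2 * p.1, p.1) = p.1 ^ 2 * k p) ∧
      ∀ s, k (0, s) = hessForm Λ (s, 1) := by
  have hblow : ContDiff ℝ ∞ fun p : ℝ × ℝ => Λ (p.2 * p.1, p.1) := by fun_prop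
  obtain ⟨k₁, hk₁, hΛk₁, -⟩ := exists_eq_axis_add_fst_mul hblow
  obtain ⟨k, hk, hk₁k, -⟩ := exists_eq_axis_add_fst_mul hk₁
  have hline : ∀ s : ℝ, VanishesToOrder 1 fun t : ℝ => (s * t, t) := fun s =>
    .of_contDiff (by fun_prop) (by simp)
  have hk₁axis : ∀ s, k₁ (0, s) = 0 := fun s =>
    eq_zero_of_vanishesToOrder_pow_mul (u := fun t => k₁ (t, s)) (i := 1) (by fun_prop) <|
      (h.comp (hline s)).congr fun t => by simpa [← Prod.zero_eq_mk, h.eq_zero] using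
        (hΛk₁ (t, s)).symm
  have hΛk : ∀ p : ℝ × ℝ, Λ (p.2 * p.1, p.1) = p.1 ^ 2 * k p := fun p => by
    rw [hΛk₁, hk₁k, hk₁axis, mul_zero, ← Prod.zero_eq_mk, h.eq_zero]
    ring
  refine ⟨k, hk, hΛk, fun s => sub_eq_zero.1 ?_⟩
  refine eq_zero_of_vanishesToOrder_pow_mul (u := fun t => k (t, s) - hessForm Λ (s, 1)) (i := 2)
    (by fun_prop) (((vanishesToOrder_sub_hessForm hΛ h).comp (hline s)).congr fun t => ?_)
  rw [hΛk (t, s), hessForm, hessForm]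
  ring

theorem exists_blowup_zero_branch (hΛ : ContDiff ℝ ∞ Λ) (h : VanishesToOrder 2 Λ)
    (hyy : pdy (pdy Λ) 0 = 0) (hxy : pdx (pdy Λ) 0 ≠ 0) :
    ∃ σ : ℝ → ℝ, Tendsto σ (𝓝 0) (𝓝 0) ∧ (∀ᶠ s in 𝓝 0, Λ (σ s * s, s) = 0) ∧
      (fun p : ℝ × ℝ => p.1 ^ 2 * (p.2 - σ p.1)) =O[𝓝 0] fun p => Λ (p.2 * p.1, p.1) := by
  obtain ⟨k, hk, hkΛ, hkaxis⟩ := exists_blowup_eq hΛ h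
  have hkaxis' : ∀ s, k (0, s) = pdx (pdx Λ) 0 / 2 * s ^ 2 + pdx (pdy Λ) 0 * s := fun s => by
    rw [hkaxis, hessForm, hyy]
    ring
  have hky : pdy k 0 = pdx (pdy Λ) 0 := pdy_eq_of_hasDerivAt hk <| by
    simp only [Prod.fst_zero, Prod.snd_zero, hkaxis']
    refine (((hasDerivAt_pow 2 (0 : ℝ)).const_mul _).add
      ((hasDerivAt_id' (0 : ℝ)).const_mul _)).congr_deriv ?_
    simp
  obtain ⟨σ, hσ, hσzero, hσO⟩ := exists_zero_branch hk
    ((hkaxis' 0).trans (by simp)) (by rwa [hky])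
  refine ⟨σ, hσ, ?_, ((isBigO_refl (fun p : ℝ × ℝ => p.1 ^ 2) (𝓝 0)).mul hσO).congr_right
    fun p => (hkΛ p).symm⟩
  filter_upwards [hσzero] with s hs
  rw [hkΛ (s, σ s), hs, mul_zero]

theorem isBigO_blowup (hΛ : ContDiff ℝ ∞ Λ) (h : VanishesToOrder 2 Λ) (hyy : pdy (pdy Λ) 0 = 0)
    (hxy : pdx (pdy Λ) 0 ≠ 0) (hH : ContDiffAt ℝ 1 H 0) (hz : ∀ᶠ p in 𝓝 0, Λ p = 0 → H p = 0) :
    (fun p : ℝ × ℝ => p.1 * H (p.2 * p.1, p.1)) =O[𝓝 0] fun p => Λ (p.2 * p.1, p.1) := by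
  obtain ⟨σ, hσ, hσzero, hσO⟩ := exists_blowup_zero_branch hΛ h hyy hxy
  obtain ⟨K, t, ht, hK⟩ := hH.exists_lipschitzOnWith
  have hblow : Tendsto (fun p : ℝ × ℝ => (p.2 * p.1, p.1)) (𝓝 0) (𝓝 0) :=
    Continuous.tendsto' (by fun_prop) _ _ (by simp)
  have hbranch : Tendsto (fun p : ℝ × ℝ => (σ p.1 * p.1, p.1)) (𝓝 0) (𝓝 0) := by
    simpa [Prod.zero_eq_mk] using
      ((hσ.comp tendsto_fst_zero).mul tendsto_fst_zero).prodMk_nhds tendsto_fst_zero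
  have hlip : (fun p : ℝ × ℝ => H (p.2 * p.1, p.1)) =O[𝓝 0] fun p => (p.2 - σ p.1) * p.1 := by
    refine .of_bound K ?_
    filter_upwards [hblow ht, hbranch ht, hbranch.eventually hz,
      tendsto_fst_zero.eventually hσzero] with p hp hp' hzp hσp
    have hle := hK.norm_sub_le hp hp'
    dsimp only at hle
    rw [hzp hσp, sub_zero, Prod.mk_sub_mk, sub_self, ← sub_mul, Prod.norm_mk, norm_zero,
      max_eq_left (norm_nonneg _)] at hle
    exact hle
  have hmul := (isBigO_refl (fun p : ℝ × ℝ => p.1) (𝓝 0)).mul hlip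
  exact (hmul.congr_right fun p => by ring).trans hσO

end ZeroSet

section Curve

variable {Λ H : ℝ × ℝ → ℝ} {c : ℝ → ℝ × ℝ} {k : ℕ}

theorem VanishesToOrder.of_mul_left {y v : ℝ → ℝ} (h : VanishesToOrder (k + 1) fun t => y t * v t)
    (hy : (fun t : ℝ => t) =O[𝓝 0] y) (hv0 : v 0 = 0) : VanishesToOrder k v := by
  have htv : (fun t => t * v t) =O[𝓝 0] fun t : ℝ => ‖t‖ ^ (k + 1) :=
    (hy.mul (isBigO_refl v (𝓝 0))).trans h
  refine (((isBigO_refl (fun t : ℝ => t⁻¹) (𝓝 0)).mul htv).congr_left fun t => ?_).trans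
    (isBigO_of_le _ fun t => ?_)
  · rcases eq_or_ne t 0 with rfl | ht
    · rw [hv0, mul_zero, mul_zero]
    · exact inv_mul_cancel_left₀ ht _
  · rcases eq_or_ne t 0 with rfl | ht
    · simp
    · simp [pow_succ', ht]

theorem mul_comp_isBigO_comp (hΛ : ContDiff ℝ ∞ Λ) (h : VanishesToOrder 2 Λ)
    (hyy : pdy (pdy Λ) 0 = 0) (hxy : pdx (pdy Λ) 0 ≠ 0) (hH : ContDiffAt ℝ 1 H 0)
    (hz : ∀ᶠ p in 𝓝 0, Λ p = 0 → H p = 0) (hc : VanishesToOrder 1 c)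
    (hx : VanishesToOrder 2 fun t => (c t).1) (hy : (fun t : ℝ => t) =O[𝓝 0] fun t => (c t).2) :
    (fun t => (c t).2 * H (c t)) =O[𝓝 0] fun t => Λ (c t) := by
  have hxy2 : (fun t => (c t).1) =O[𝓝 0] fun t => (c t).2 ^ 2 :=
    hx.trans (hy.norm_left.pow 2)
  have hslope : (fun t => (c t).1 / (c t).2) =O[𝓝 0] fun t => (c t).2 := by
    refine (hxy2.mul (isBigO_refl (fun t => (c t).2⁻¹) (𝓝 0))).congr
      (fun t => (div_eq_mul_inv _ _).symm) fun t => ?_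
    simp [sq]
  have hytend : Tendsto (fun t => (c t).2) (𝓝 0) (𝓝 0) := hc.snd.tendsto_zero (N := 0)
  have hq : Tendsto (fun t => ((c t).2, (c t).1 / (c t).2)) (𝓝 0) (𝓝 0) :=
    hytend.prodMk_nhds (hslope.trans_tendsto hytend)
  have hcq : ∀ᶠ t in 𝓝 0, ((c t).1 / (c t).2 * (c t).2, (c t).2) = c t := by
    filter_upwards [hxy2.eq_zero_imp] with t ht
    exact Prod.ext (div_mul_cancel_of_imp fun h0 => ht (by simp [h0])) rfl
  refine ((isBigO_blowup hΛ h hyy hxy hH hz).comp_tendsto hq).congr' ?_ ?_ <;>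
    filter_upwards [hcq] with t ht <;> simp only [Function.comp_apply, ht]

theorem pdy_pdy_eq_zero_of_vanishesToOrder_comp (hΛ : ContDiff ℝ ∞ Λ) (h : VanishesToOrder 2 Λ)
    (hc : VanishesToOrder 1 c) (hx : VanishesToOrder 2 fun t => (c t).1)
    (hy : (fun t : ℝ => t) =O[𝓝 0] fun t => (c t).2)
    (hΛc : VanishesToOrder 3 fun t => Λ (c t)) : pdy (pdy Λ) 0 = 0 := by
  have hform := hΛc.sub ((vanishesToOrder_sub_hessForm hΛ h).comp hc)
  have hxx : VanishesToOrder 3 fun t => (c t).1 * (c t).1 := (hx.mul hx).mono (by simp)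
  have hxy : VanishesToOrder 3 fun t => (c t).1 * (c t).2 := hx.mul hc.snd
  have hyy : VanishesToOrder 3 fun t => (c t).2 ^ 2 • (pdy (pdy Λ) 0 / 2) := by
    refine ((hform.sub (hxx.const_mul (pdx (pdx Λ) 0 / 2))).sub
      (hxy.const_mul (pdx (pdy Λ) 0))).congr fun t => ?_
    rw [hessForm, smul_eq_mul]
    ring
  simpa using eq_zero_of_vanishesToOrder_pow_smul hy hyy

theorem vanishesToOrder_fst_of_comp (hΛ : ContDiff ℝ ∞ Λ) (h : VanishesToOrder 2 Λ)
    (hdet : (hess Λ).det ≠ 0) (hH : ContDiffAt ℝ 1 H 0) (hz : ∀ᶠ p in 𝓝 0, Λ p = 0 → H p = 0)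
    (hc : VanishesToOrder 1 c) (hx : ∀ᶠ t in 𝓝 0, HasDerivAt (fun t => (c t).1) (H (c t)) t)
    (hy : (fun t : ℝ => t) =O[𝓝 0] fun t => (c t).2) (hk : 2 ≤ k)
    (hΛc : VanishesToOrder k fun t => Λ (c t)) : VanishesToOrder k fun t => (c t).1 := by
  have hc0 : (c 0).1 = 0 := hc.fst.eq_zero
  have hH0 : H 0 = 0 := hz.self_of_nhds h.eq_zero
  have hx2 : VanishesToOrder 2 fun t => (c t).1 :=
    .of_hasDerivAt hc0 hx ((VanishesToOrder.of_differentiableAt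
      (hH.differentiableAt (by simp)) hH0).comp hc)
  rcases hk.eq_or_lt with rfl | hk
  · exact hx2
  obtain ⟨j, rfl⟩ : ∃ j, k = j + 1 := ⟨k - 1, by lia⟩
  have hyy := pdy_pdy_eq_zero_of_vanishesToOrder_comp hΛ h hc hx2 hy (hΛc.mono hk)
  have hxy : pdx (pdy Λ) 0 ≠ 0 := fun hxy => hdet (by rw [det_hess hΛ, hyy, hxy]; ring)
  have hyH : VanishesToOrder (j + 1) fun t => (c t).2 * H (c t) :=
    (mul_comp_isBigO_comp hΛ h hyy hxy hH hz hc hx2 hy).trans hΛc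
  exact .of_hasDerivAt hc0 hx (hyH.of_mul_left hy (by rw [hc.eq_zero, hH0]))

theorem vanishesToOrder_comp_iff_axis (hΛ : ContDiff ℝ ∞ Λ) (h : VanishesToOrder 2 Λ)
    (hdet : (hess Λ).det ≠ 0) (hH : ContDiffAt ℝ 1 H 0) (hz : ∀ᶠ p in 𝓝 0, Λ p = 0 → H p = 0)
    (hc : VanishesToOrder 1 c) (hx : ∀ᶠ t in 𝓝 0, HasDerivAt (fun t => (c t).1) (H (c t)) t)
    (hy : (fun t : ℝ => t) =O[𝓝 0] fun t => (c t).2) :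
    (VanishesToOrder k fun t => Λ (c t)) ↔ VanishesToOrder k fun t => Λ (0, (c t).2) := by
  have haxis : VanishesToOrder 1 fun t => ((0 : ℝ), (c t).2) := .prodMk .zero hc.snd
  rcases le_or_gt k 2 with hk | hk
  · exact iff_of_true ((h.comp hc).mono hk) ((h.comp haxis).mono hk)
  have hdiff : ∀ j, 2 ≤ j → VanishesToOrder j (fun t => Λ (c t)) →
      VanishesToOrder (j + 1) fun t => Λ (c t) - Λ (0, (c t).2) := fun j hj hΛc => by
    have hfst := vanishesToOrder_fst_of_comp hΛ h hdet hH hz hc hx hy hj hΛc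
    rw [add_comm]
    refine .comp_sub_of_fderiv (.of_forall (hΛ.differentiable (by simp))) (h.fderiv hΛ) hc haxis
      ((hfst.prodMk (.zero (F := ℝ))).congr fun t => ?_)
    ext <;> simp
  refine ⟨fun hΛc => ?_, fun hΛaxis => ?_⟩
  · exact (hΛc.sub ((hdiff k hk.le hΛc).mono (by simp))).congr fun t => by ring
  · suffices ∀ j, 2 ≤ j → j ≤ k → VanishesToOrder j fun t => Λ (c t) from this k hk.le le_rfl
    intro j hj
    induction j, hj using Nat.le_induction with
    | base => exact fun _ => h.comp hc
    | succ j hj ih =>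
      exact fun hjk => ((hdiff j hj (ih (by lia))).add (hΛaxis.mono hjk)).congr fun t => by ring

end Curve

theorem isBigO_snd_of_hasDerivAt {c : ℝ → ℝ × ℝ} {v : ℝ × ℝ} (hc0 : c 0 = 0)
    (hc : HasDerivAt c v 0) (hv : v ≠ 0) (hv₁ : v.1 = 0) :
    (fun t : ℝ => t) =O[𝓝 0] fun t => (c t).2 := by
  have hv₂ : v.2 ≠ 0 := fun hv₂ => hv (Prod.ext hv₁ hv₂)
  have hsnd : HasDerivAt (fun t => (c t).2) v.2 0 :=
    (ContinuousLinearMap.snd ℝ ℝ ℝ).hasFDerivAt.comp_hasDerivAt (0 : ℝ) hc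
  have hpair : Tendsto (fun t : ℝ => (t, (0 : ℝ))) (𝓝 0) (𝓝 0 ×ˢ pure 0) :=
    tendsto_id.prodMk tendsto_const_pure
  simpa [Function.comp_def, hc0] using
    (hsnd.isTheta_sub hv₂).isBigO_symm.comp_tendsto hpair

namespace IsPrenormalForm

variable {f η φ ψ : ℝ × ℝ → ℝ × ℝ} {g : ℝ × ℝ → ℝ}

theorem apply_zero (h : IsPrenormalForm f φ ψ g) (hf0 : f 0 = 0) : g 0 = 0 := by
  have heq := h.eventually_eq.self_of_nhds
  rw [h.source.map_zero, hf0, h.target.map_zero] at heq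
  exact (congrArg Prod.snd heq).symm

theorem exists_pdy_eq_mul (h : IsPrenormalForm f φ ψ g) (hf : ContDiff ℝ ∞ f) (hf0 : f 0 = 0) :
    ∃ w, ContDiff ℝ ∞ w ∧ w 0 ≠ 0 ∧ ∀ᶠ p in 𝓝 0, pdy g p = w p * jacDet f (φ p) := by
  have hφ := h.source.contDiff
  have hψ := h.target.contDiff
  refine ⟨fun p => jacDet ψ (f (φ p)) * jacDet φ p,
    ((contDiff_jacDet hψ).comp (hf.comp hφ)).mul (contDiff_jacDet hφ), ?_, ?_⟩
  · dsimp only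
    rw [h.source.map_zero, hf0]
    exact mul_ne_zero h.target.jacDet_ne_zero h.source.jacDet_ne_zero
  · filter_upwards [h.eventually_eq.eventually_nhds] with p hp
    have hcomp : jacDet (fun q => ψ (f (φ q))) p = jacDet (fun q => (q.1, g q)) p := by
      rw [jacDet, jacDet, EventuallyEq.fderiv_eq hp]
    rw [← jacDet_fst_prodMk (h.contDiff.differentiable (by simp)), ← hcomp, mul_right_comm,
      ← jacDet_comp (hψ.differentiable (by simp) _) (hf.differentiable (by simp) _),
      ← jacDet_comp ((hψ.comp hf).differentiable (by simp) _) (hφ.differentiable (by simp) _)]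
    rfl

theorem vanishesToOrder_pdy_iff (h : IsPrenormalForm f φ ψ g) (hf : ContDiff ℝ ∞ f)
    (hf0 : f 0 = 0) {N : ℕ} : VanishesToOrder N (pdy g) ↔ VanishesToOrder N (jacDet f) := by
  obtain ⟨w, hw, hw0, hgw⟩ := h.exists_pdy_eq_mul hf hf0
  obtain ⟨χ, hχ, hright, -⟩ := h.source.exists_inverse
  refine (VanishesToOrder.iff_of_eq_mul hw.continuous.continuousAt hw0 hgw).trans
    ⟨fun hφ => (hφ.comp hχ.vanishesToOrder).congr' ?_,
    fun hJ => hJ.comp h.source.vanishesToOrder⟩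
  exact hright.mono fun q hq => by rw [hq]

theorem exists_det_hess_pdy_eq (h : IsPrenormalForm f φ ψ g) (hf : ContDiff ℝ ∞ f) (hf0 : f 0 = 0)
    (hJ : VanishesToOrder 2 (jacDet f)) :
    ∃ K : ℝ, K ≠ 0 ∧ (hess (pdy g)).det = K ^ 2 * (hess (jacDet f)).det := by
  obtain ⟨w, hw, hw0, hgw⟩ := h.exists_pdy_eq_mul hf hf0
  have hsrc := h.source.contDiff
  have hJ' := contDiff_jacDet hf
  refine ⟨w 0 * jacDet φ 0, mul_ne_zero hw0 h.source.jacDet_ne_zero, ?_⟩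
  rw [← det_hess_mul_comp hJ' hJ hw hsrc h.source.map_zero]
  exact det_hess_congr (contDiff_pdy h.contDiff) (hw.mul (hJ'.comp hsrc))
    ((h.vanishesToOrder_pdy_iff hf hf0).2 hJ)
    (.congr' .zero (hgw.mono fun _ hp => sub_eq_zero.2 hp))

/-- The first component of `f_* η`, in the coordinates of a prenormal form. -/
def pushforwardFst (f φ ψ η : ℝ × ℝ → ℝ × ℝ) (p : ℝ × ℝ) : ℝ :=
  (fderiv ℝ (fun q => ψ (f q)) (φ p) (η (φ p))).1

theorem contDiffAt_pushforwardFst (h : IsPrenormalForm f φ ψ g) (hf : ContDiff ℝ ∞ f)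
    (hη : IsNullVF f η) : ContDiffAt ℝ 1 (pushforwardFst f φ ψ η) 0 := by
  have hF : ContDiff ℝ ∞ (fderiv ℝ fun q => ψ (f q)) :=
    (h.target.contDiff.comp hf).fderiv_right (by simp)
  have hη' : ContDiffAt ℝ ∞ η (φ 0) := by
    rw [h.source.map_zero]
    exact hη.eventually_contDiffAt.self_of_nhds
  exact (((hF.comp h.source.contDiff).contDiffAt.clm_apply
    (hη'.comp 0 h.source.contDiff.contDiffAt)).fst).of_le (by simp)

theorem pushforwardFst_eq_zero (h : IsPrenormalForm f φ ψ g) (hf : ContDiff ℝ ∞ f)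
    (hf0 : f 0 = 0) (hη : IsNullVF f η) :
    ∀ᶠ p in 𝓝 0, pdy g p = 0 → pushforwardFst f φ ψ η p = 0 := by
  obtain ⟨w, hw, hw0, hgw⟩ := h.exists_pdy_eq_mul hf hf0
  have hnull := (h.source.vanishesToOrder.tendsto_zero (N := 0)).eventually
    hη.eventually_fderiv_eq_zero
  filter_upwards [hgw, hw.continuous.continuousAt.eventually_ne hw0, hnull] with p hgp hwp hnp hp
  have hJ : jacDet f (φ p) = 0 := (mul_eq_zero.1 (hgp.symm.trans hp)).resolve_left hwp
  rw [pushforwardFst, fderiv_fun_comp _ (h.target.contDiff.differentiable (by simp) _)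
    (hf.differentiable (by simp) _), ContinuousLinearMap.comp_apply, hnp hJ, map_zero]
  rfl

theorem exists_lift_integralCurve (h : IsPrenormalForm f φ ψ g) (hf : ContDiff ℝ ∞ f)
    (hf0 : f 0 = 0) (hη : IsNullVF f η) (hg : pdy g 0 = 0) {γ : ℝ → ℝ × ℝ} (hγ0 : γ 0 = 0)
    (hγ : ∀ᶠ t in 𝓝 0, HasDerivAt γ (η (γ t)) t) :
    ∃ c : ℝ → ℝ × ℝ, VanishesToOrder 1 c ∧ (∀ᶠ t in 𝓝 0, φ (c t) = γ t) ∧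
      (∀ᶠ t in 𝓝 0, HasDerivAt (fun s => (c s).1) (pushforwardFst f φ ψ η (c t)) t) ∧
      (fun t : ℝ => t) =O[𝓝 0] fun t => (c t).2 := by
  obtain ⟨χ, hχ, hright, -⟩ := h.source.exists_inverse
  have hγtend : Tendsto γ (𝓝 0) (𝓝 0) := by
    simpa only [hγ0] using hγ.self_of_nhds.continuousAt.tendsto
  have hc : VanishesToOrder 1 fun t => χ (γ t) := hχ.vanishesToOrder.comp
    (.of_differentiableAt hγ.self_of_nhds.differentiableAt hγ0)
  have hφc : ∀ᶠ t in 𝓝 0, φ (χ (γ t)) = γ t := hγtend.eventually hright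
  have hfst : ∀ᶠ t in 𝓝 0, (χ (γ t)).1 = (ψ (f (γ t))).1 := by
    filter_upwards [hc.tendsto_zero.eventually h.eventually_eq, hφc] with t ht hφt
    rw [← hφt, ht, hφt]
  have hx : ∀ᶠ t in 𝓝 0,
      HasDerivAt (fun s => (χ (γ s)).1) (pushforwardFst f φ ψ η (χ (γ t))) t := by
    filter_upwards [hγ, hφc, hfst.eventually_nhds] with t ht hφt hfst_t
    have hF : HasFDerivAt (fun q => ψ (f q)) (fderiv ℝ (fun q => ψ (f q)) (γ t)) (γ t) :=
      ((h.target.contDiff.comp hf).differentiable (by simp) _).hasFDerivAt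
    rw [pushforwardFst, hφt]
    exact ((hasFDerivAt_fst.comp_hasDerivAt t (hF.comp_hasDerivAt t ht))).congr_of_eventuallyEq
      hfst_t
  have hvel : HasDerivAt (fun t => χ (γ t)) (fderiv ℝ χ 0 (η 0)) 0 := by
    have hχγ := (hχ.contDiff.differentiable (by simp) (γ 0)).hasFDerivAt.comp_hasDerivAt 0
      hγ.self_of_nhds
    rwa [hγ0] at hχγ
  refine ⟨fun t => χ (γ t), hc, hφc, hx, isBigO_snd_of_hasDerivAt hc.eq_zero hvel ?_ ?_⟩
  · exact (map_ne_zero_iff _ hχ.bijective.1).2 hη.1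
  · have hvel₁ := (hasFDerivAt_fst.comp_hasDerivAt (0 : ℝ) hvel).unique hx.self_of_nhds
    rw [hc.eq_zero] at hvel₁
    exact hvel₁.trans ((h.pushforwardFst_eq_zero hf hf0 hη).self_of_nhds hg)

theorem etaIter_eq_zero_iff (h : IsPrenormalForm f φ ψ g) (hf : ContDiff ℝ ∞ f) (hf0 : f 0 = 0)
    (hη : IsNullVF f η) (hg : VanishesToOrder 2 (pdy g)) (hdet : (hess (pdy g)).det ≠ 0) {k : ℕ} :
    (∀ i < k, etaIter η i (jacDet f) 0 = 0) ↔ ∀ i < k, pdy^[i + 1] g 0 = 0 := by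
  obtain ⟨γ, hγ0, hγ⟩ :=
    exists_integralCurve (hη.eventually_contDiffAt.self_of_nhds.of_le (by simp))
  obtain ⟨c, hc, hφc, hx, hy⟩ := h.exists_lift_integralCurve hf hf0 hη hg.eq_zero hγ0 hγ
  obtain ⟨w, hw, hw0, hgw⟩ := h.exists_pdy_eq_mul hf hf0
  have hwc : ContinuousAt (fun t => w (c t)) 0 := hw.continuous.continuousAt.comp
    (by simpa only [ContinuousAt, hc.eq_zero] using hc.tendsto_zero (N := 0))
  have hJγ : (VanishesToOrder k fun t => jacDet f (γ t)) ↔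
      VanishesToOrder k fun t => pdy g (c t) := by
    refine (VanishesToOrder.iff_of_eq_mul hwc (by rwa [hc.eq_zero]) ?_).symm
    filter_upwards [hc.tendsto_zero.eventually hgw, hφc] with t ht hφt
    rw [ht, hφt]
  have hpdy := contDiff_pdy h.contDiff
  have haxis := (isDerivChain_iterate_pdy hpdy).vanishesToOrder_comp_iff (k := k) hc.snd hy
  have hchain := isDerivChain_etaIter hη.eventually_contDiffAt (contDiff_jacDet hf) hγ0 hγ
  have hlift := vanishesToOrder_comp_iff_axis (k := k) hpdy hg hdet
    (h.contDiffAt_pushforwardFst hf hη) (h.pushforwardFst_eq_zero hf hf0 hη) hc hx hy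
  simpa only [hγ0, ← Prod.zero_eq_mk, Function.iterate_succ_apply] using
    hchain.vanishesToOrder_iff.symm.trans (hJγ.trans (hlift.trans haxis))

end IsPrenormalForm

section Recognition

variable {f η φ ψ : ℝ × ℝ → ℝ × ℝ} {g u : ℝ × ℝ → ℝ} {n r : ℕ}

/-- The recognition criterion for `(x, x y ^ 2 + y ^ (n + 1))`: the function `Λ` has a saddle point
at `0` with value zero, and `n` is the index of the first nonzero term of the sequence `d`, which
stands for the iterated derivatives of `Λ` at `0` in the null direction. -/
def RecognitionCriterion (n : ℕ) (Λ : ℝ × ℝ → ℝ) (d : ℕ → ℝ) : Prop :=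
  VanishesToOrder 2 Λ ∧ (hess Λ).det < 0 ∧ (∀ i < n, d i = 0) ∧ d n ≠ 0

theorem recognitionCriterion_etaIter_iff (hr : 3 ≤ r) (hu : ContDiff ℝ ∞ u) (h0 : u 0 = 0) :
    RecognitionCriterion (r - 1) u (fun i => etaIter η i u 0) ↔
      fderiv ℝ u 0 = 0 ∧ (hess u).det < 0 ∧ (∀ i, 2 ≤ i → i ≤ r - 2 → etaIter η i u 0 = 0) ∧
        etaIter η (r - 1) u 0 ≠ 0 := by
  rw [RecognitionCriterion, vanishesToOrder_two_iff hu, and_iff_right h0]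
  refine and_congr_right fun hd => and_congr_right fun _ => and_congr_left fun _ =>
    ⟨fun h i _ hi => h i (by lia), fun h i hi => ?_⟩
  match i, hi with
  | 0, _ => exact h0
  | 1, _ => exact DFunLike.congr_fun hd _
  | i + 2, hi => exact h _ (by lia) (by lia)

theorem IsPrenormalForm.recognitionCriterion_iff (h : IsPrenormalForm f φ ψ g)
    (hf : ContDiff ℝ ∞ f) (hf0 : f 0 = 0) (hη : IsNullVF f η) :
    RecognitionCriterion n (jacDet f) (fun i => etaIter η i (jacDet f) 0) ↔
      RecognitionCriterion n (pdy g) fun i => pdy^[i + 1] g 0 := by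
  rw [RecognitionCriterion, RecognitionCriterion, h.vanishesToOrder_pdy_iff hf hf0]
  refine and_congr_right fun hJ => ?_
  obtain ⟨K, hK, hdet⟩ := h.exists_det_hess_pdy_eq hf hf0 hJ
  have hK2 : 0 < K ^ 2 := by positivity
  have hsign : (hess (jacDet f)).det < 0 ↔ (hess (pdy g)).det < 0 := by
    rw [hdet, ← smul_eq_mul, smul_neg_iff_of_pos_left hK2]
  rw [hsign]
  refine and_congr_right fun hneg => ?_
  have hiff := fun k => h.etaIter_eq_zero_iff (k := k) hf hf0 hη
    ((h.vanishesToOrder_pdy_iff hf hf0).2 hJ) hneg.ne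
  have hsucc := hiff (n + 1)
  simp only [Nat.forall_lt_succ_right] at hsucc
  have := hiff n
  tauto

theorem pdy_sub_model (hg : ContDiff ℝ ∞ g) (p : ℝ × ℝ) :
    pdy (fun q => g q - (q.1 * q.2 ^ 2 + q.2 ^ r)) p =
      pdy g p - (2 * (p.1 * p.2) + r * p.2 ^ (r - 1)) :=
  pdy_eq_of_hasDerivAt (by fun_prop) <|
    ((hasDerivAt_pdy hg p.1 p.2).sub (((hasDerivAt_pow 2 p.2).const_mul p.1).add
      (hasDerivAt_pow r p.2))).congr_deriv (by push_cast; ring)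

theorem iterate_pdy_of_vanishesToOrder_sub_model (hg : ContDiff ℝ ∞ g)
    (h : VanishesToOrder (r + 1) fun p => g p - (p.1 * p.2 ^ 2 + p.2 ^ r)) :
    (∀ i < r, pdy^[i] g 0 = 0) ∧ pdy^[r] g 0 ≠ 0 := by
  have hpow : VanishesToOrder r fun t : ℝ => t ^ r := vanishesToOrder_id.pow r
  have haxis : VanishesToOrder (r + 1) fun t : ℝ => g (0, t) - t ^ r :=
    (h.comp (φ := fun t : ℝ => ((0 : ℝ), t)) (.prodMk .zero vanishesToOrder_id)).congr
      fun t => by simp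
  have hchain := isDerivChain_iterate_pdy hg
  have hlow : ∀ i < r, pdy^[i] g 0 = 0 :=
    hchain.vanishesToOrder_iff.1 <| ((haxis.mono (by simp)).add hpow).congr fun t => by simp
  refine ⟨hlow, fun htop => one_ne_zero (α := ℝ) ?_⟩
  have hg_axis : VanishesToOrder (r + 1) fun t => g (0, t) :=
    hchain.vanishesToOrder_iff.2 (Nat.forall_lt_succ_right.2 ⟨hlow, htop⟩)
  exact eq_zero_of_vanishesToOrder_pow_smul (isBigO_refl _ _)
    ((hg_axis.sub haxis).congr fun t => by simp)

theorem recognitionCriterion_of_vanishesToOrder_sub_model (hr : 4 ≤ r) (hg : ContDiff ℝ ∞ g)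
    (h : VanishesToOrder (r + 1) fun p => g p - (p.1 * p.2 ^ 2 + p.2 ^ r)) :
    RecognitionCriterion (r - 1) (pdy g) fun i => pdy^[i + 1] g 0 := by
  have hgy : VanishesToOrder r fun p => pdy g p - (2 * (p.1 * p.2) + r * p.2 ^ (r - 1)) :=
    ((vanishesToOrder_succ_iff (by fun_prop)).1 h).2.2.congr fun p => (pdy_sub_model hg p).symm
  have hpow : VanishesToOrder 3 fun p : ℝ × ℝ => (r : ℝ) * p.2 ^ (r - 1) :=
    ((vanishesToOrder_snd.pow (r - 1)).mono (by lia)).const_mul _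
  have hquad : VanishesToOrder 3 fun p => pdy g p - 2 * (p.1 * p.2) :=
    ((hgy.mono (by lia)).add hpow).congr fun p => by ring
  have hgy2 : VanishesToOrder 2 (pdy g) :=
    ((hquad.mono (by simp)).add
      ((vanishesToOrder_fst.mul vanishesToOrder_snd).const_mul 2)).congr fun p => by ring
  have hdet : (hess (pdy g)).det = 4 * 0 * 0 - 2 ^ 2 :=
    det_hess_eq_of_vanishesToOrder_sub (contDiff_pdy hg) hgy2 (hquad.congr fun p => by ring)
  obtain ⟨hlow, htop⟩ := iterate_pdy_of_vanishesToOrder_sub_model hg h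
  refine ⟨hgy2, by rw [hdet]; norm_num, fun i hi => hlow _ (by lia), ?_⟩
  rwa [← Nat.sub_add_cancel (by lia : 1 ≤ r)] at htop

theorem RecognitionCriterion.jetEquiv_model (hr : 4 ≤ r) (hg : ContDiff ℝ ∞ g) (hg0 : g 0 = 0)
    (h : RecognitionCriterion (r - 1) (pdy g) fun i => pdy^[i + 1] g 0) :
    JetEquiv r (fun p => (p.1, g p)) fun p => (p.1, p.1 * p.2 ^ 2 + p.2 ^ r) := by
  obtain ⟨hgy, hdet, hlow, htop⟩ := h
  have hyyy : pdy (pdy (pdy g)) 0 = 0 := hlow 2 (by lia)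
  have hxyy : pdx (pdy (pdy g)) 0 ≠ 0 := fun hxyy => by
    rw [det_hess (contDiff_pdy hg), hyyy, hxyy] at hdet
    simp at hdet
  refine fst_prodMk_jetEquiv_model hr hg (fun i hi => ?_) ?_ hgy hxyy
  · rcases i with _ | i
    · exact hg0
    · exact hlow i (by lia)
  · rwa [← Nat.sub_add_cancel (by lia : 1 ≤ r)]

end Recognition

theorem stmt8 (f η : ℝ × ℝ → ℝ × ℝ)
    (hf : ContDiff ℝ (⊤ : ℕ∞) f) (hf0 : f 0 = 0) (hcr : CorankOne f)
    (hη : IsNullVF f η) :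
    ∀ r : ℕ, 4 ≤ r →
      (JetEquiv r f (fun p => (p.1, p.1 * p.2 ^ 2 + p.2 ^ r)) ↔
        (fderiv ℝ (jacDet f) 0 = 0 ∧ (hess (jacDet f)).det < 0 ∧
          (∀ i, 2 ≤ i → i ≤ r - 2 → etaIter η i (jacDet f) 0 = 0) ∧
          etaIter η (r - 1) (jacDet f) 0 ≠ 0)) := by
  intro r hr
  rw [← recognitionCriterion_etaIter_iff (by lia) (contDiff_jacDet hf) hcr.jacDet_eq_zero]
  constructor
  · intro hequiv
    obtain ⟨k, rfl⟩ : ∃ k, r = k + 1 := ⟨r - 1, by lia⟩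
    obtain ⟨φ, ψ, g, hg, hmodel⟩ := hequiv.exists_isPrenormalForm hf (by fun_prop)
    exact (hg.recognitionCriterion_iff hf hf0 hη).2
      (recognitionCriterion_of_vanishesToOrder_sub_model hr hg.contDiff hmodel)
  · intro hcrit
    obtain ⟨φ, ψ, g, hg⟩ := hcr.exists_isPrenormalForm hf hf0
    have hg0 := hg.apply_zero hf0
    exact .trans hf (contDiff_fst.prodMk hg.contDiff) (by fun_prop) hf0 (by simp [hg0])
      (hg.jetEquiv hf) (((hg.recognitionCriterion_iff hf hf0 hη).1 hcrit).jetEquiv_model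
        hr hg.contDiff hg0)
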